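/- arXiv:2301.03420 — 3 statements merged into one kernel-verified Lean document; each statement's English description precedes it below -/
import Mathlib

section
/- Let V = {A,B,C,D,E,F,G,Z} be an 8-element set and let F be the collection of twenty 4-element subsets {A,B,C,D}, {A,B,C,G}, {A,B,D,E}, {A,B,E,F}, {A,B,F,Z}, {A,B,G,Z}, {A,C,D,Z}, {A,C,G,Z}, {A,D,E,Z}, {A,E,F,Z}, {B,C,D,E}, {B,C,E,F}, {B,C,F,G}, {B,F,G,Z}, {C,D,E,F}, {C,D,F,G}, {C,D,G,Z}, {D,E,F,G}, {D,E,G,Z}, {E,F,G,Z} (the facets of the boundary of the 4-polytope H_8). Then for every labelling φ : V → {1,2,3,4} such that the sets {A,B,G,Z} and {C,D,E,F} are both rainbow (i.e., φ is injective on each), there exists a facet in F distinct from {A,B,G,Z} and {C,D,E,F} that is also rainbow. -/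
/-- The eight vertices of Grünbaum's polytope `H₈`. -/
abbrev H8V := Fin 8

namespace H8
def A : H8V := 0
def B : H8V := 1
def C : H8V := 2
def D : H8V := 3
def E : H8V := 4
def F : H8V := 5
def G : H8V := 6
def Z : H8V := 7

/-- The twenty facets of the boundary complex of `H₈`. -/
def facets : Finset (Finset H8V) :=
  { {A,B,C,D}, {A,B,C,G}, {A,B,D,E}, {A,B,E,F}, {A,B,F,Z},
    {A,B,G,Z}, {A,C,D,Z}, {A,C,G,Z}, {A,D,E,Z}, {A,E,F,Z},
    {B,C,D,E}, {B,C,E,F}, {B,C,F,G}, {B,F,G,Z}, {C,D,E,F},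
    {C,D,F,G}, {C,D,G,Z}, {D,E,F,G}, {D,E,G,Z}, {E,F,G,Z} }

def σ0 : Finset H8V := {A,B,G,Z}
def σ1 : Finset H8V := {C,D,E,F}

/-- A set of vertices is rainbow under a labelling `φ` if `φ` is injective on it.
Labels `1,2,3,4` are represented by `Fin 4` (label `k` being `k-1`). -/
def Rainbow (φ : H8V → Fin 4) (σ : Finset H8V) : Prop := Set.InjOn φ ↑σ

end H8

/-
Swapping a vertex of a rainbow set for another one with the same label keeps the set rainbow. As
`CDEF` carries all four labels, each of `B` and `G` shares its label with one of `C`, `D`, `E`, `F`.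
If `B` is paired with `C`, `D` or `F`, a single swap in `ABGZ` or `CDEF` yields the facet `ACGZ`,
`BCEF` or `BCDE`. If `B` is paired with `E`, look at `G`: a partner `C`, `E` or `F` gives `DEFG`,
`CDFG` or `ABFZ` in the same way, and for the partner `D` swapping both `B` and `G` turns `ABGZ`
into `ADEZ`.
-/

theorem injOn_insert_diff_singleton {α β : Type*} {f : α → β} {s : Set α} {v w : α}
    (hs : s.InjOn f) (hv : v ∈ s) (hvw : f v = f w) : (insert w (s \ {v})).InjOn f := by
  have ne_of_mem : ∀ x ∈ s \ {v}, f x ≠ f w := fun x hx hxw =>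
    hx.2 (hs hx.1 hv (hxw.trans hvw.symm))
  rintro x (rfl | hx) y (rfl | hy) hxy
  · rfl
  · exact absurd hxy.symm (ne_of_mem y hy)
  · exact absurd hxy (ne_of_mem x hx)
  · exact hs hx.1 hy.1 hxy

namespace H8

variable {φ : H8V → Fin 4}

theorem Rainbow.insert_erase {σ : Finset H8V} {v w : H8V} (hσ : Rainbow φ σ) (hv : v ∈ σ)
    (hvw : φ v = φ w) : Rainbow φ (insert w (σ.erase v)) := by
  rw [Rainbow, Finset.coe_insert, Finset.coe_erase]
  exact injOn_insert_diff_singleton hσ hv hvw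

theorem Rainbow.label_eq_C_or_D_or_E_or_F (h1 : Rainbow φ σ1) (v : H8V) :
    φ v = φ C ∨ φ v = φ D ∨ φ v = φ E ∨ φ v = φ F := by
  have surjOn_σ1 : Set.SurjOn φ σ1 (Finset.univ : Finset (Fin 4)) :=
    Finset.surjOn_of_injOn_of_card_le φ (fun _ _ => Finset.mem_coe.2 (Finset.mem_univ _)) h1
      (by decide)
  obtain ⟨w, hw, hwv⟩ := surjOn_σ1 (Finset.mem_coe.2 (Finset.mem_univ (φ v)))
  simp only [σ1, Finset.mem_coe, Finset.mem_insert, Finset.mem_singleton] at hw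
  rcases hw with rfl | rfl | rfl | rfl <;> simp only [hwv, true_or, or_true]

end H8

open H8 in
/-- Lemma 5.1: any labelling of the vertices of `H₈` by four labels making the
facets `σ₀ = ABGZ` and `σ₁ = CDEF` rainbow makes some further facet rainbow. -/
theorem h8_third_rainbow_facet (φ : H8V → Fin 4)
    (h0 : Rainbow φ σ0) (h1 : Rainbow φ σ1) :
    ∃ τ ∈ facets, τ ≠ σ0 ∧ τ ≠ σ1 ∧ Rainbow φ τ := by
  rcases h1.label_eq_C_or_D_or_E_or_F B with hBC | hBD | hBE | hBF
  · exact ⟨insert C (σ0.erase B), by decide, by decide, by decide,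
      h0.insert_erase (by decide) hBC⟩
  · exact ⟨insert B (σ1.erase D), by decide, by decide, by decide,
      h1.insert_erase (by decide) hBD.symm⟩
  · rcases h1.label_eq_C_or_D_or_E_or_F G with hGC | hGD | hGE | hGF
    · exact ⟨insert G (σ1.erase C), by decide, by decide, by decide,
        h1.insert_erase (by decide) hGC.symm⟩
    · exact ⟨insert D ((insert E (σ0.erase B)).erase G), by decide, by decide, by decide,
        (h0.insert_erase (by decide) hBE).insert_erase (by decide) hGD⟩
    · exact ⟨insert G (σ1.erase E), by decide, by decide, by decide,
        h1.insert_erase (by decide) hGE.symm⟩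
    · exact ⟨insert F (σ0.erase G), by decide, by decide, by decide,
        h0.insert_erase (by decide) hGF⟩
  · exact ⟨insert B (σ1.erase F), by decide, by decide, by decide,
      h1.insert_erase (by decide) hBF.symm⟩
end

section
/- For every triangulation K of the 2-simplex Δ² and every facet (triangle) σ of K, there exists a Sperner labelling of K in which σ is the unique rainbow facet. -/
open Geometry

/-- A (finite) triangulation of the `d`-simplex: a finite geometric simplicial
complex in `ℝ^d` whose underlying space is the convex hull of `d+1` affinely
independent points (the corners of `Δ^d`). -/
structure SimplexTriangulation (d : ℕ) where
  K : Geometry.SimplicialComplex ℝ (EuclideanSpace ℝ (Fin d))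
  corner : Fin (d + 1) → EuclideanSpace ℝ (Fin d)
  indep : AffineIndependent ℝ corner
  finite : K.faces.Finite
  space_eq : K.space = convexHull ℝ (Set.range corner)

namespace SimplexTriangulation

variable {d : ℕ}

/-- Facets of the triangulation: faces with `d+1` vertices (i.e. `d`-simplices). -/
def IsFacet (T : SimplexTriangulation d) (σ : Finset (EuclideanSpace ℝ (Fin d))) : Prop :=
  σ ∈ T.K.faces ∧ σ.card = d + 1

/-- A Sperner labelling: each corner `vᵢ` of `Δ^d` gets label `i`, and any vertex
of the triangulation lying in a face of `Δ^d` (the convex hull of a set of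
corners) gets the label of one of the corners of that face. -/
def IsSperner (T : SimplexTriangulation d)
    (l : EuclideanSpace ℝ (Fin d) → Fin (d + 1)) : Prop :=
  (∀ i, l (T.corner i) = i) ∧
  ∀ x ∈ T.K.vertices, ∀ s : Set (Fin (d + 1)),
    x ∈ convexHull ℝ (T.corner '' s) → ∃ i ∈ s, l x = i

end SimplexTriangulation

/-- A simplex is rainbow when the labelling is injective on its vertices. -/
def Rainbow {α : Type*} {m : ℕ} (l : α → Fin m) (σ : Finset α) : Prop :=
  Set.InjOn l ↑σ

/-!
Fix a point `c` in the interior of `σ`. If `h` is a function on the vertices such that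
`h + 3 · (polar angle about c) / 2π`, followed along an edge, changes by at most `1`, then its floor
modulo `3` is a labelling whose edges step by `-1`, `0` or `1`, and a triangle is rainbow exactly
when its boundary turns around `c`, which happens for `σ` and for no other facet. Applied to the
points on a common side of the big triangle, the same remark gives the Sperner condition, so the
points of each side are joined by edges as well.

Such an `h` is a potential, which exists as soon as a closed walk winding `w` times around `c` has
at least `3w` edges. Enclose every edge in a convex wall: the side of the big triangle containing
it, or else the edge itself. For `1 ≤ k ≤ w`, the region of winding number at least `k` contains `c`
and is bounded by walls met by the walk; it needs at least three of them, since two closed convex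
sets never separate a point outside them from infinity. Finally, a wall bounds the region for at
most as many values of `k` as the walk has edges in that wall.
-/

open EuclideanGeometry Module Real Set Filter Topology

section Angles

theorem continuousAt_angle_toReal {θ : Real.Angle} (hθ : θ ≠ π) :
    ContinuousAt Real.Angle.toReal θ := by
  have : Fact (0 < 2 * π) := ⟨two_pi_pos⟩
  rw [← Real.Angle.neg_coe_pi, ← Real.Angle.coe_neg] at hθ
  exact continuous_subtype_val.continuousAt.comp (AddCircle.continuousAt_equivIoc (2 * π) (-π) hθ)

variable {E : Type*} [NormedAddCommGroup E] [InnerProductSpace ℝ E] [Fact (finrank ℝ E = 2)]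
  [Module.Oriented ℝ E (Fin 2)] {p x y z : E} {S : Set E}

/-- The oriented angle, in `(-π, π]`, under which an observer at `p` sees the segment from `x`
to `y`; it is `0` if `p` is an endpoint, and `π` if `p` is strictly between the endpoints. -/
noncomputable def viewAngle (p x y : E) : ℝ :=
  (∡ x p y).toReal

theorem coe_viewAngle (p x y : E) : (viewAngle p x y : Real.Angle) = ∡ x p y :=
  (∡ x p y).coe_toReal

theorem viewAngle_eq_pi_iff_sbtw : viewAngle p x y = π ↔ Sbtw ℝ x p y := by
  rw [viewAngle, Real.Angle.toReal_eq_pi_iff, oangle_eq_pi_iff_sbtw]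

theorem viewAngle_swap (h : ¬ Sbtw ℝ x p y) : viewAngle p y x = -viewAngle p x y := by
  rw [viewAngle, oangle_rev, viewAngle, Real.Angle.toReal_neg_eq_neg_toReal_iff]
  rwa [Ne, oangle_eq_pi_iff_sbtw]

theorem continuousAt_viewAngle (h : p ∉ segment ℝ x y) :
    ContinuousAt (fun q => viewAngle q x y) p := by
  have hx : x ≠ p := fun e => h (e ▸ left_mem_segment ℝ x y)
  have hy : y ≠ p := fun e => h (e ▸ right_mem_segment ℝ x y)
  have hangle : ContinuousAt (fun q => ∡ x q y) p :=
    (continuousAt_oangle (x := (x, p, y)) hx hy).comp (f := fun q : E => (x, q, y)) (by fun_prop)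
  refine (continuousAt_angle_toReal ?_).comp hangle
  rw [Ne, oangle_eq_pi_iff_sbtw]
  exact fun hs => h (mem_segment_iff_wbtw.2 hs.wbtw)

theorem exists_viewAngle_eq_sub (hS : Convex ℝ S) (hS' : IsClosed S) (hp : p ∉ S) :
    ∃ φ : E → ℝ, ∀ x ∈ S, ∀ y ∈ S, viewAngle p x y = φ y - φ x := by
  obtain ⟨f, u, hfp, hf⟩ := geometric_hahn_banach_point_closed hS hS' hp
  have : FiniteDimensional ℝ E := .of_fact_finrank_eq_two
  set n : E := (InnerProductSpace.toDual ℝ E).symm f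
  have inner_pos : ∀ x ∈ S, 0 < inner ℝ n (x - p) := fun x hx => by
    rw [InnerProductSpace.toDual_symm_apply, map_sub]
    linarith [hf x hx]
  let φ : E → ℝ := fun x => (o.oangle n (x - p)).toReal
  have hφ : ∀ x ∈ S, |φ x| < π / 2 := fun x hx => by
    rw [← Real.Angle.cos_pos_iff_abs_toReal_lt_pi_div_two]
    have := inner_pos x hx
    rw [o.inner_eq_norm_mul_norm_mul_cos_oangle] at this
    exact pos_of_mul_pos_right this (by positivity)
  refine ⟨φ, fun x hx y hy => ?_⟩
  have hn : n ≠ 0 := fun h => by simpa [h] using inner_pos x hx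
  have sub_ne_zero : ∀ x ∈ S, x - p ≠ 0 := fun x hx h => by simpa [h] using inner_pos x hx
  have hsub : ∡ x p y = ((φ y - φ x : ℝ) : Real.Angle) := by
    rw [Real.Angle.coe_sub, Real.Angle.coe_toReal, Real.Angle.coe_toReal]
    exact (o.oangle_sub_left hn (sub_ne_zero x hx) (sub_ne_zero y hy)).symm
  have hx' := abs_lt.1 (hφ x hx)
  have hy' := abs_lt.1 (hφ y hy)
  rw [viewAngle, hsub, Real.Angle.toReal_coe_eq_self_iff]
  constructor <;> linarith [hx'.1, hx'.2, hy'.1, hy'.2]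

/-- The total angle under which an observer at `p` sees the boundary of a triangle. -/
noncomputable def triangleAngle (p x y z : E) : ℝ :=
  viewAngle p x y + viewAngle p y z + viewAngle p z x

theorem triangleAngle_eq_zero (hp : p ∉ convexHull ℝ {x, y, z}) : triangleAngle p x y z = 0 := by
  obtain ⟨φ, hφ⟩ := exists_viewAngle_eq_sub (convex_convexHull ℝ _)
    ((toFinite {x, y, z}).isClosed_convexHull ℝ) hp
  have mem : ∀ q ∈ ({x, y, z} : Set E), q ∈ convexHull ℝ {x, y, z} :=
    fun _ hq => subset_convexHull ℝ _ hq
  rw [triangleAngle, hφ x (mem x (by simp)) y (mem y (by simp)),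
    hφ y (mem y (by simp)) z (mem z (by simp)), hφ z (mem z (by simp)) x (mem x (by simp))]
  ring

theorem oangle_barycentric_sign (x y z : E) {a b d : ℝ} (h : a + b + d = 1) :
    (∡ x (a • x + b • y + d • z) y).sign = SignType.sign d * (∡ x z y).sign := by
  have hsub : a • x + b • y + d • z - y = d • (z - y) + a • (x - y) := by
    obtain rfl : b = 1 - a - d := by linarith
    module
  rw [← oangle_rotate_sign, ← oangle_rotate_sign x z y, oangle, oangle, vsub_eq_sub, vsub_eq_sub,
    vsub_eq_sub, hsub, o.oangle_sign_smul_add_smul_left]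

theorem triangleAngle_ne_zero (B : AffineBasis (Fin 3) ℝ E)
    (hp : p ∈ interior (convexHull ℝ (range B))) : triangleAngle p (B 0) (B 1) (B 2) ≠ 0 := by
  rw [B.interior_convexHull] at hp
  have hsum := B.sum_coord_apply_eq_one p
  have hcomb := B.linear_combination_coord_eq_self p
  rw [Fin.sum_univ_three] at hsum hcomb
  have h01 : (∡ (B 0) p (B 1)).sign = (∡ (B 0) (B 2) (B 1)).sign := by
    conv_lhs => rw [← hcomb]
    rw [oangle_barycentric_sign _ _ _ hsum, sign_pos (hp 2), one_mul]
  have h12 : (∡ (B 1) p (B 2)).sign = (∡ (B 0) (B 2) (B 1)).sign := by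
    conv_lhs => rw [← hcomb, add_rotate]
    rw [oangle_barycentric_sign _ _ _ (by rw [← hsum]; ring), sign_pos (hp 0), one_mul,
      oangle_rotate_sign, oangle_rotate_sign]
  have h20 : (∡ (B 2) p (B 0)).sign = (∡ (B 0) (B 2) (B 1)).sign := by
    conv_lhs => rw [← hcomb, ← add_rotate]
    rw [oangle_barycentric_sign _ _ _ (by rw [← hsum]; ring), sign_pos (hp 1), one_mul,
      oangle_rotate_sign]
  have hne : (∡ (B 0) (B 2) (B 1)).sign ≠ 0 := by
    rw [Ne, oangle_sign_eq_zero_iff_collinear, ← affineIndependent_iff_not_collinear_set]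
    convert! B.ind.comp_embedding (Equiv.swap (1 : Fin 3) 2).toEmbedding using 1
    ext i
    fin_cases i <;> rfl
  have sign_viewAngle : ∀ {x y : E}, (∡ x p y).sign = (∡ (B 0) (B 2) (B 1)).sign →
      SignType.sign (viewAngle p x y) = (∡ (B 0) (B 2) (B 1)).sign := fun {x y} h => by
    rw [viewAngle, Real.Angle.sign_toReal (Real.Angle.sign_ne_zero_iff.1 (h ▸ hne)).2, h]
  replace h01 := sign_viewAngle h01
  replace h12 := sign_viewAngle h12
  replace h20 := sign_viewAngle h20
  rw [triangleAngle]
  rcases (∡ (B 0) (B 2) (B 1)).sign.trichotomy with hs | hs | hs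
  · rw [hs, sign_eq_neg_one_iff] at h01 h12 h20
    exact (add_neg (add_neg h01 h12) h20).ne
  · exact absurd hs hne
  · rw [hs, sign_eq_one_iff] at h01 h12 h20
    exact (add_pos (add_pos h01 h12) h20).ne'

end Angles

section Winding

variable {E : Type*} [NormedAddCommGroup E] [InnerProductSpace ℝ E] {G : SimpleGraph E}
  {p u v : E} {S D : Set E}

open Classical in
/-- The number of times the polygonal path `P` passes through `p`, edge by edge. -/
noncomputable def hits (p : E) (P : G.Walk u v) : ℕ :=
  P.darts.countP fun d => p ∈ segment ℝ d.fst d.snd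

theorem hits_pos_iff {P : G.Walk u v} :
    0 < hits p P ↔ ∃ d ∈ P.darts, p ∈ segment ℝ d.fst d.snd := by
  simp only [hits, List.countP_pos_iff, decide_eq_true_eq]

theorem notMem_support_of_not_nil {P : G.Walk u v} (hP : ¬P.Nil)
    (hp : ∀ ⦃x y⦄, G.Adj x y → p ∉ segment ℝ x y) : p ∉ P.support := by
  intro h
  obtain ⟨y, hy⟩ := G.mem_support_of_mem_walk_support P hP h
  exact hp hy (left_mem_segment ℝ p y)

variable [Fact (finrank ℝ E = 2)] [Module.Oriented ℝ E (Fin 2)]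

/-- The total signed angle swept by the line of sight of an observer at `p` as a traveller follows
the polygonal path `P`. -/
noncomputable def turning (p : E) (P : G.Walk u v) : ℝ :=
  (P.darts.map fun d => viewAngle p d.fst d.snd).sum

/-- The winding number about `p` of the closed polygon `P`. When `p` lies on the polygon, each edge
through `p` contributes a half turn, so this is the largest winding number about points near `p`. -/
noncomputable def windingNumber (p : E) (P : G.Walk u v) : ℤ :=
  round (turning p P / (2 * π))

@[simp]
theorem turning_nil : turning p (.nil : G.Walk u u) = 0 := rfl

@[simp]
theorem windingNumber_nil : windingNumber p (.nil : G.Walk u u) = 0 := by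
  rw [windingNumber, turning_nil, zero_div, round_zero]

@[simp]
theorem turning_cons {w : E} (h : G.Adj u w) (P : G.Walk w v) :
    turning p (.cons h P) = viewAngle p u w + turning p P := rfl

theorem coe_turning (P : G.Walk u v) (hp : p ∉ P.support) :
    (turning p P : Real.Angle) = ∡ u p v := by
  induction P with
  | nil => simp
  | @cons u w v h P ih =>
    rw [SimpleGraph.Walk.support_cons, List.mem_cons, not_or] at hp
    have hw : w ≠ p := fun e => hp.2 (e ▸ P.start_mem_support)
    have hv : v ≠ p := fun e => hp.2 (e ▸ P.end_mem_support)
    rw [turning_cons, Real.Angle.coe_add, coe_viewAngle, ih hp.2, oangle_add (Ne.symm hp.1) hw hv]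

theorem turning_eq_two_pi_mul (P : G.Walk u u) (hp : p ∉ P.support) :
    turning p P = 2 * π * windingNumber p P := by
  have h := coe_turning P hp
  rw [oangle_self_left_right, Real.Angle.coe_eq_zero_iff] at h
  obtain ⟨n, hn⟩ := h
  rw [windingNumber, ← hn, zsmul_eq_mul, mul_div_cancel_right₀ _ two_pi_pos.ne', round_intCast,
    mul_comm]

theorem windingNumber_eq_zero (P : G.Walk u u) (hD : Convex ℝ D) (hD' : IsClosed D)
    (hP : ∀ x ∈ P.support, x ∈ D) (hp : p ∉ D) : windingNumber p P = 0 := by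
  obtain ⟨φ, hφ⟩ := exists_viewAngle_eq_sub hD hD' hp
  have turning_eq : ∀ {u v : E} (P : G.Walk u v), (∀ x ∈ P.support, x ∈ D) →
      turning p P = φ v - φ u := by
    intro u v P
    induction P with
    | nil => simp
    | @cons u w v h P ih =>
      intro hP
      rw [SimpleGraph.Walk.support_cons, List.forall_mem_cons] at hP
      rw [turning_cons, ih hP.2, hφ u hP.1 w (hP.2 w P.start_mem_support)]
      ring
  rw [windingNumber, turning_eq P hP, sub_self, zero_div, round_zero]

theorem eventually_viewAngle_near {x y : E} (hx : p ≠ x) (hy : p ≠ y) {ε : ℝ} (hε : 0 < ε) :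
    ∀ᶠ q in 𝓝 p, viewAngle q x y < viewAngle p x y + ε ∧
      (p ∉ segment ℝ x y → viewAngle p x y - ε < viewAngle q x y) := by
  by_cases hp : p ∈ segment ℝ x y
  · have hpi := viewAngle_eq_pi_iff_sbtw.2 ⟨mem_segment_iff_wbtw.1 hp, hx, hy⟩
    refine .of_forall fun q => ⟨?_, fun h => absurd hp h⟩
    rw [hpi]
    exact (Real.Angle.toReal_le_pi _).trans_lt (lt_add_of_pos_right π hε)
  · have h := continuousAt_viewAngle hp
    filter_upwards [h.eventually_lt_const (lt_add_of_pos_right _ hε),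
      h.eventually_const_lt (sub_lt_self _ hε)] with q h₁ h₂
    exact ⟨h₁, fun _ => h₂⟩

theorem eventually_turning_near (P : G.Walk u v) (hp : p ∉ P.support) {ε : ℝ} (hε : 0 < ε) :
    ∀ᶠ q in 𝓝 p, turning q P < turning p P + ε ∧
      turning p P - 2 * π * hits p P - ε < turning q P := by
  classical
  induction P generalizing ε with
  | nil => simp [hits, hε]
  | @cons u w v h P ih =>
    rw [SimpleGraph.Walk.support_cons, List.mem_cons, not_or] at hp
    have hw : p ≠ w := fun e => hp.2 (e ▸ P.start_mem_support)
    filter_upwards [eventually_viewAngle_near hp.1 hw (half_pos hε), ih hp.2 (half_pos hε)]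
      with q hedge hrest
    rw [turning_cons, turning_cons]
    refine ⟨by linarith [hedge.1, hrest.1], ?_⟩
    rw [hits, SimpleGraph.Walk.darts_cons, List.countP_cons, ← hits]
    by_cases hseg : p ∈ segment ℝ u w
    · have h₁ : viewAngle p u w ≤ π := Real.Angle.toReal_le_pi _
      have h₂ : -π < viewAngle q u w := Real.Angle.neg_pi_lt_toReal _
      simp only [hseg, decide_true, if_true, Nat.cast_add, Nat.cast_one]
      linarith [hrest.2]
    · simp only [hseg, decide_false, Bool.false_eq_true, if_false, add_zero]
      linarith [hedge.2 hseg, hrest.2]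

theorem eventually_windingNumber_near (P : G.Walk u u) (hp : p ∉ P.support) :
    ∀ᶠ q in 𝓝 p, windingNumber q P ≤ windingNumber p P ∧
      windingNumber p P - hits p P ≤ windingNumber q P := by
  have eventually_notMem : ∀ᶠ q in 𝓝 p, q ∉ P.support :=
    P.support.finite_toSet.isClosed.isOpen_compl.mem_nhds hp
  filter_upwards [eventually_turning_near P hp pi_pos, eventually_notMem]
    with q hq hqP
  rw [turning_eq_two_pi_mul P hp, turning_eq_two_pi_mul P hqP] at hq
  have upper : (windingNumber q P : ℝ) < windingNumber p P + 1 := by nlinarith [hq.1, pi_pos]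
  have lower : (windingNumber p P : ℝ) - hits p P < windingNumber q P + 1 := by
    nlinarith [hq.2, pi_pos]
  exact ⟨Int.lt_add_one_iff.1 (by exact_mod_cast upper),
    Int.lt_add_one_iff.1 (by exact_mod_cast lower)⟩

theorem windingNumber_eqOn (P : G.Walk u u) (hS : IsPreconnected S)
    (hPS : ∀ x ∈ P.support, x ∉ S)
    (hseg : ∀ d ∈ P.darts, ∀ q ∈ S, q ∈ segment ℝ d.fst d.snd → S ⊆ segment ℝ d.fst d.snd)
    {p q : E} (hp : p ∈ S) (hq : q ∈ S) : windingNumber p P = windingNumber q P := by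
  have continuousOn_viewAngle : ∀ d ∈ P.darts,
      ContinuousOn (fun q => viewAngle q d.fst d.snd) S := by
    intro d hd
    by_cases hmeet : ∃ q ∈ S, q ∈ segment ℝ d.fst d.snd
    · obtain ⟨q, hq, hqd⟩ := hmeet
      refine continuousOn_const.congr fun r hr => viewAngle_eq_pi_iff_sbtw.2
        ⟨mem_segment_iff_wbtw.1 (hseg d hd q hq hqd hr), ?_, ?_⟩
      · rintro rfl
        exact hPS _ (P.dart_fst_mem_support_of_mem_darts hd) hr
      · rintro rfl
        exact hPS _ (P.dart_snd_mem_support_of_mem_darts hd) hr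
    · exact fun q hq =>
        (continuousAt_viewAngle fun h => hmeet ⟨q, hq, h⟩).continuousWithinAt
  have continuousOn_turning : ContinuousOn (fun q => turning q P) S :=
    continuousOn_list_sum _ continuousOn_viewAngle
  have continuousOn_windingNumber : ContinuousOn (fun q => windingNumber q P) S := by
    rw [Int.isClosedEmbedding_coe_real.isInducing.continuousOn_iff]
    refine (continuousOn_turning.div_const (2 * π)).congr fun q hq => ?_
    simp only [Function.comp_apply]
    rw [turning_eq_two_pi_mul P fun h => hPS q h hq, mul_div_cancel_left₀ _ two_pi_pos.ne']
  exact hS.constant continuousOn_windingNumber hp hq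

end Winding

section Separation

variable {E : Type*} [NormedAddCommGroup E] [NormedSpace ℝ E] {c : E}

theorem dense_forall_add_smul_notMem (hE : 1 < finrank ℝ E) {V : Set E} (hV : V.Finite) (u : E) :
    Dense {z : E | ∀ t : ℝ, z + t • u ∉ V} := by
  have hspan : ℝ ∙ u < ⊤ := lt_top_iff_ne_top.2 fun h => by
    have hle := finrank_span_le_card (R := ℝ) ({u} : Set E)
    rw [h, finrank_top, toFinset_singleton, Finset.card_singleton] at hle
    exact hle.not_gt hE
  obtain ⟨g, hg0, hg⟩ := Submodule.exists_le_ker_of_lt_top _ hspan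
  have hgu : g u = 0 := hg (Submodule.mem_span_singleton_self u)
  have hdense : Dense (g ⁻¹' (g '' V)ᶜ) :=
    ((hV.image g).countable.dense_compl ℝ).preimage
      (g.isOpenMap_of_finiteDimensional (g.surjective hg0))
  have hsub : g ⁻¹' (g '' V)ᶜ ⊆ {z | ∀ t : ℝ, z + t • u ∉ V} := fun z hz t hmem =>
    hz ⟨z + t • u, hmem, by rw [map_add, map_smul, hgu, smul_zero, add_zero]⟩
  exact hdense.mono hsub

theorem exists_add_smul_notMem {D : Set E} (hD : Bornology.IsBounded D) {u : E} (hu : u ≠ 0)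
    (z : E) : ∃ t : ℝ, 0 ≤ t ∧ z + t • u ∉ D := by
  obtain ⟨R, hR⟩ := hD.subset_ball z
  refine ⟨|R| / ‖u‖, by positivity, fun hmem => ?_⟩
  have hlt := hR hmem
  rw [Metric.mem_ball, dist_self_add_left, norm_smul, norm_div, norm_norm,
    div_mul_cancel₀ _ (norm_ne_zero_iff.2 hu), Real.norm_eq_abs, abs_abs] at hlt
  exact hlt.not_ge (le_abs_self R)

variable [FiniteDimensional ℝ E]

theorem exists_ne_zero_forall_apply_eq_zero {ι : Type*} [Fintype ι]
    (hι : Fintype.card ι < finrank ℝ E) (f : ι → StrongDual ℝ E) : ∃ u ≠ 0, ∀ i, f i u = 0 := by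
  have hker := LinearMap.ker_ne_bot_of_finrank_lt (f := LinearMap.pi fun i => (f i).toLinearMap)
    (by rwa [finrank_fintype_fun_eq_card])
  obtain ⟨u, hu, hu0⟩ := Submodule.exists_mem_ne_zero_of_ne_bot hker
  exact ⟨u, hu0, fun i => congrFun (LinearMap.mem_ker.1 hu) i⟩

theorem exists_ne_zero_forall_apply_nonpos {ι : Type*} [Fintype ι] [Nontrivial E]
    (hι : Fintype.card ι ≤ finrank ℝ E) (f : ι → StrongDual ℝ E) : ∃ u ≠ 0, ∀ i, f i u ≤ 0 := by
  classical
  rcases isEmpty_or_nonempty ι with _ | ⟨⟨i₀⟩⟩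
  · exact (exists_ne (0 : E)).imp fun u hu => ⟨hu, isEmptyElim⟩
  obtain ⟨u, hu0, hu⟩ := exists_ne_zero_forall_apply_eq_zero (E := E) (ι := {i // i ≠ i₀})
    ((Fintype.card_subtype_lt (p := (· ≠ i₀)) (x := i₀) (by simp)).trans_le hι) fun i => f i
  rcases le_total (f i₀ u) 0 with hi₀ | hi₀
  · refine ⟨u, hu0, fun i => ?_⟩
    rcases eq_or_ne i i₀ with rfl | hi
    exacts [hi₀, (hu ⟨i, hi⟩).le]
  · refine ⟨-u, neg_ne_zero.2 hu0, fun i => ?_⟩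
    rw [map_neg, neg_nonpos]
    rcases eq_or_ne i i₀ with rfl | hi
    exacts [hi₀, (hu ⟨i, hi⟩).ge]

theorem exists_direction_avoiding [Nontrivial E] {B : Finset (Set E)} (hB : B.card ≤ finrank ℝ E)
    (hconvex : ∀ S ∈ B, Convex ℝ S) (hclosed : ∀ S ∈ B, IsClosed S) (hc : ∀ S ∈ B, c ∉ S) :
    ∃ u ≠ 0, ∀ᶠ z in 𝓝 c, ∀ t : ℝ, 0 ≤ t → ∀ S ∈ B, z + t • u ∉ S := by
  choose f δ hfc hf using fun S : B =>
    geometric_hahn_banach_point_closed (hconvex S S.2) (hclosed S S.2) (hc S S.2)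
  obtain ⟨u, hu0, hu⟩ := exists_ne_zero_forall_apply_nonpos (by rwa [Fintype.card_coe]) f
  refine ⟨u, hu0, ?_⟩
  have eventually_lt : ∀ᶠ z in 𝓝 c, ∀ S, f S z < δ S :=
    eventually_all.2 fun S => (f S).continuous.continuousAt.eventually_lt_const (hfc S)
  filter_upwards [eventually_lt] with z hz t ht S hS hmem
  have := hf ⟨S, hS⟩ _ hmem
  rw [map_add, map_smul, smul_eq_mul] at this
  linarith [hz ⟨S, hS⟩, mul_nonpos_of_nonneg_of_nonpos ht (hu ⟨S, hS⟩)]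

end Separation

theorem mem_openSegment_of_notMem_support {E : Type*} [AddCommGroup E] [Module ℝ E]
    {G : SimpleGraph E} {p u v : E} {P : G.Walk u v} (hp : p ∉ P.support) {d : G.Dart}
    (hd : d ∈ P.darts) (hpd : p ∈ segment ℝ d.fst d.snd) : p ∈ openSegment ℝ d.fst d.snd :=
  mem_openSegment_of_ne_left_right
    (fun h => hp (h ▸ P.dart_fst_mem_support_of_mem_darts hd))
    (fun h => hp (h ▸ P.dart_snd_mem_support_of_mem_darts hd)) hpd

/-- A system of convex walls for the edges of a graph `G` drawn in a region `D`: each edge lies in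
its wall, edges crossing each other share their wall, and a wall lies along the boundary of `D`
unless it is a single edge whose interior meets no vertex. -/
structure ConvexWalls {E : Type*} [NormedAddCommGroup E] [NormedSpace ℝ E] (G : SimpleGraph E)
    (D : Set E) where
  /-- The wall containing the edge from `x` to `y`. -/
  wall : E → E → Set E
  segment_subset {x y : E} : G.Adj x y → segment ℝ x y ⊆ wall x y
  convex {x y : E} : G.Adj x y → Convex ℝ (wall x y)
  isClosed {x y : E} : G.Adj x y → IsClosed (wall x y)
  wall_eq {x y x' y' p : E} : G.Adj x y → G.Adj x' y' → p ∈ openSegment ℝ x y →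
    p ∈ openSegment ℝ x' y' → wall x y = wall x' y'
  outer_or_inner {x y : E} : G.Adj x y → wall x y ⊆ closure Dᶜ ∨
    wall x y = segment ℝ x y ∧ ∀ z ∈ G.support, z ∉ openSegment ℝ x y

namespace ConvexWalls

variable {E : Type*} [NormedAddCommGroup E] [InnerProductSpace ℝ E] {G : SimpleGraph E}
  {D S : Set E} {c p u v : E} {k : ℤ} (W : ConvexWalls G D)

/-- The walls containing the successive edges of `P`, with multiplicity. -/
def wallsOf (P : G.Walk u v) : List (Set E) :=
  P.darts.map fun d => W.wall d.fst d.snd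

theorem wall_eq_of_mem_darts {P : G.Walk u v} (hp : p ∉ P.support) {d e : G.Dart}
    (hd : d ∈ P.darts) (he : e ∈ P.darts) (hpd : p ∈ segment ℝ d.fst d.snd)
    (hpe : p ∈ segment ℝ e.fst e.snd) : W.wall d.fst d.snd = W.wall e.fst e.snd :=
  W.wall_eq d.adj e.adj (mem_openSegment_of_notMem_support hp hd hpd)
    (mem_openSegment_of_notMem_support hp he hpe)

open Classical in
theorem hits_le_count {P : G.Walk u v} (hp : p ∉ P.support) {d : G.Dart}
    (hd : d ∈ P.darts) (hpd : p ∈ segment ℝ d.fst d.snd) :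
    hits p P ≤ (W.wallsOf P).count (W.wall d.fst d.snd) := by
  rw [hits, wallsOf, List.count, List.countP_map]
  refine List.countP_mono_left fun e he hpe => ?_
  rw [Function.comp_apply, beq_iff_eq]
  exact W.wall_eq_of_mem_darts hp he hd (of_decide_eq_true hpe) hpd

variable [Fact (finrank ℝ E = 2)] [Module.Oriented ℝ E (Fin 2)]

/-- The wall `S` blocks the level `k` if the superlevel set `{windingNumber ≥ k}` can be left across
an edge of `P` lying in `S`. -/
def Blocks (P : G.Walk u v) (S : Set E) (k : ℤ) : Prop :=
  ∃ p ∉ P.support, (∃ d ∈ P.darts, W.wall d.fst d.snd = S ∧ p ∈ segment ℝ d.fst d.snd) ∧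
    windingNumber p P - hits p P < k ∧ k ≤ windingNumber p P

theorem windingNumber_le_hits (hD : Convex ℝ D) (hD' : IsClosed D) {P : G.Walk u u}
    (hPD : ∀ x ∈ P.support, x ∈ D) (hp : p ∉ P.support) (hpD : p ∈ closure Dᶜ) :
    windingNumber p P ≤ hits p P := by
  obtain ⟨z, hzD, hz⟩ := ((mem_closure_iff_frequently.1 hpD).and_eventually
    (eventually_windingNumber_near P hp)).exists
  rw [windingNumber_eq_zero P hD hD' hPD hzD] at hz
  linarith [hz.2]

theorem windingNumber_eq_of_inner {P : G.Walk u u} {d : G.Dart} (hd : d ∈ P.darts)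
    (hwall : W.wall d.fst d.snd = segment ℝ d.fst d.snd)
    (hvertex : ∀ z ∈ G.support, z ∉ openSegment ℝ d.fst d.snd)
    (hinner : ∀ e ∈ P.darts, W.wall e.fst e.snd = W.wall d.fst d.snd →
      W.wall e.fst e.snd = segment ℝ e.fst e.snd)
    {q : E} (hp : p ∈ openSegment ℝ d.fst d.snd) (hq : q ∈ openSegment ℝ d.fst d.snd) :
    windingNumber p P = windingNumber q P := by
  have notMem : ∀ x ∈ P.support, x ∉ openSegment ℝ d.fst d.snd := fun x hx =>
    hvertex x (G.mem_support_of_mem_walk_support P (fun h => by simp [h.eq_nil] at hd) hx)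
  refine windingNumber_eqOn P (convex_openSegment _ _).isPreconnected notMem
    (fun e he r hr hre => ?_) hp hq
  have heq : W.wall e.fst e.snd = W.wall d.fst d.snd :=
    W.wall_eq_of_mem_darts (fun h => notMem r h hr) he hd hre (openSegment_subset_segment ℝ _ _ hr)
  rw [← hinner e he heq, heq, hwall]
  exact openSegment_subset_segment ℝ _ _

open Classical in
theorem exists_forall_blocks_mem_Ioc (hD : Convex ℝ D) (hD' : IsClosed D)
    {P : G.Walk u u} (hPD : ∀ x ∈ P.support, x ∈ D) (S : Set E) :
    ∃ m : ℤ, ∀ k, 1 ≤ k → W.Blocks P S k → k ∈ Ioc m (m + (W.wallsOf P).count S) := by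
  by_cases hS : S ⊆ closure Dᶜ
  · refine ⟨0, ?_⟩
    rintro k hk ⟨p, hp, ⟨d, hd, rfl, hpd⟩, -, hkp⟩
    have hle := windingNumber_le_hits hD hD' hPD hp (hS (W.segment_subset d.adj hpd))
    have hcount := W.hits_le_count hp hd hpd
    rw [mem_Ioc]
    lia
  by_cases hblocks : ∃ k, W.Blocks P S k
  · obtain ⟨-, p, hp, ⟨d, hd, rfl, hpd⟩, -⟩ := hblocks
    have inner : ∀ e ∈ P.darts, W.wall e.fst e.snd = W.wall d.fst d.snd →
        W.wall e.fst e.snd = segment ℝ e.fst e.snd := fun e _ he =>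
      ((W.outer_or_inner e.adj).resolve_left (he ▸ hS)).1
    obtain ⟨hwall, hvertex⟩ := (W.outer_or_inner d.adj).resolve_left hS
    refine ⟨windingNumber p P - (W.wallsOf P).count (W.wall d.fst d.snd), ?_⟩
    rintro k - ⟨q, hq, ⟨e, -, hed, hqe⟩, hkq⟩
    have hqd : q ∈ segment ℝ d.fst d.snd := hwall ▸ hed ▸ W.segment_subset e.adj hqe
    have heq := W.windingNumber_eq_of_inner hd hwall hvertex inner
      (mem_openSegment_of_notMem_support hp hd hpd) (mem_openSegment_of_notMem_support hq hd hqd)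
    have hcount := W.hits_le_count hq hd hqd
    rw [mem_Ioc]
    lia
  · exact ⟨0, fun k _ hk => absurd ⟨k, hk⟩ hblocks⟩

open Classical in
theorem card_filter_blocks_le_count (hD : Convex ℝ D) (hD' : IsClosed D) {P : G.Walk u u}
    (hPD : ∀ x ∈ P.support, x ∈ D) (S : Set E) (N : ℤ) :
    ((Finset.Icc 1 N).filter (W.Blocks P S)).card ≤ (W.wallsOf P).count S := by
  obtain ⟨m, hm⟩ := W.exists_forall_blocks_mem_Ioc hD hD' hPD S
  have hsub : (Finset.Icc 1 N).filter (W.Blocks P S) ⊆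
      Finset.Ioc m (m + (W.wallsOf P).count S) := fun k hk => by
    rw [Finset.mem_filter, Finset.mem_Icc] at hk
    exact Finset.mem_Ioc.2 (hm k hk.1.1 hk.2)
  simpa only [Int.card_Ioc, add_sub_cancel_left, Int.toNat_natCast] using Finset.card_le_card hsub

/-- Away from the walls blocking level `k`, the superlevel set `{windingNumber ≥ k}` is clopen. -/
theorem le_windingNumber_of_isPreconnected {P : G.Walk u u} (hS : IsPreconnected S)
    (hP : ∀ x ∈ P.support, x ∉ S) (hblocks : ∀ p ∈ S, ∀ A, W.Blocks P A k → p ∉ A) {q : E}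
    (hp : p ∈ S) (hpk : k ≤ windingNumber p P) (hq : q ∈ S) : k ≤ windingNumber q P := by
  have eventually_le : ∀ z ∈ S, k ≤ windingNumber z P → ∀ᶠ y in 𝓝 z, k ≤ windingNumber y P := by
    intro z hz hzk
    have hzP : z ∉ P.support := fun h => hP z h hz
    suffices h : k ≤ windingNumber z P - hits z P from
      (eventually_windingNumber_near P hzP).mono fun y hy => h.trans hy.2
    by_contra! hlt
    have hits_pos : 0 < hits z P := by lia
    obtain ⟨d, hd, hzd⟩ := hits_pos_iff.1 hits_pos
    exact hblocks z hz _ ⟨z, hzP, ⟨d, hd, rfl, hzd⟩, hlt, hzk⟩ (W.segment_subset d.adj hzd)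
  have eventually_lt : ∀ z ∈ S, windingNumber z P < k → ∀ᶠ y in 𝓝 z, windingNumber y P < k :=
    fun z hz hzk => (eventually_windingNumber_near P fun h => hP z h hz).mono
      fun y hy => hy.1.trans_lt hzk
  by_contra! hqk
  obtain ⟨z, -, hz_le, hz_lt⟩ := hS {z | ∀ᶠ y in 𝓝 z, k ≤ windingNumber y P}
    {z | ∀ᶠ y in 𝓝 z, windingNumber y P < k} isOpen_setOfPred_eventually_nhds
    isOpen_setOfPred_eventually_nhds
    (fun z hz => (le_or_gt k (windingNumber z P)).imp (eventually_le z hz) (eventually_lt z hz))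
    ⟨p, hp, eventually_le p hp hpk⟩ ⟨q, hq, eventually_lt q hq hqk⟩
  obtain ⟨y, hle, hlt⟩ := (hz_le.and hz_lt).exists
  exact hle.not_gt hlt

theorem eventually_windingNumber_eq {P : G.Walk u u} (hP : c ∉ P.support)
    (hc : ∀ ⦃x y⦄, G.Adj x y → c ∉ W.wall x y) :
    ∀ᶠ z in 𝓝 c, windingNumber z P = windingNumber c P := by
  have hits_eq : hits c P = 0 := by
    by_contra hne
    obtain ⟨d, -, hd⟩ := hits_pos_iff.1 (Nat.pos_of_ne_zero hne)
    exact hc d.adj (W.segment_subset d.adj hd)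
  filter_upwards [eventually_windingNumber_near P hP] with z hz
  rw [hits_eq, Nat.cast_zero, sub_zero] at hz
  exact hz.1.antisymm hz.2

open Classical in
theorem three_le_card_blocks (hD : Convex ℝ D) (hD' : IsCompact D) {P : G.Walk u u}
    (hPD : ∀ x ∈ P.support, x ∈ D) (hc : ∀ ⦃x y⦄, G.Adj x y → c ∉ W.wall x y)
    (hk : 1 ≤ k) (hkc : k ≤ windingNumber c P) :
    3 ≤ {S ∈ (W.wallsOf P).toFinset | W.Blocks P S k}.card := by
  have hfinrank : finrank ℝ E = 2 := Fact.out
  have : FiniteDimensional ℝ E := .of_fact_finrank_eq_two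
  have : Nontrivial E := nontrivial_of_finrank_eq_succ hfinrank
  by_contra! hcard
  have exists_dart : ∀ S ∈ {S ∈ (W.wallsOf P).toFinset | W.Blocks P S k},
      ∃ d : G.Dart, W.wall d.fst d.snd = S := fun S hS => by
    rw [Finset.mem_filter, List.mem_toFinset, wallsOf, List.mem_map] at hS
    exact hS.1.imp fun d hd => hd.2
  obtain ⟨u, hu0, hu⟩ := exists_direction_avoiding (c := c)
    (B := {S ∈ (W.wallsOf P).toFinset | W.Blocks P S k}) (by lia)
    (fun S hS => by obtain ⟨d, rfl⟩ := exists_dart S hS; exact W.convex d.adj)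
    (fun S hS => by obtain ⟨d, rfl⟩ := exists_dart S hS; exact W.isClosed d.adj)
    (fun S hS => by obtain ⟨d, rfl⟩ := exists_dart S hS; exact hc d.adj)
  have hcP : c ∉ P.support := notMem_support_of_not_nil
    (fun h => by simp only [h.eq_nil, windingNumber_nil] at hkc; lia)
    fun x y hxy h => hc hxy (W.segment_subset hxy h)
  obtain ⟨z, hzP, hz, hzc⟩ := ((mem_closure_iff_frequently.1
    (dense_forall_add_smul_notMem (by lia) P.support.finite_toSet u c)).and_eventually
      (hu.and (W.eventually_windingNumber_eq hcP hc))).exists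
  obtain ⟨t, ht, htD⟩ := exists_add_smul_notMem hD'.isBounded hu0 z
  have hray := W.le_windingNumber_of_isPreconnected (P := P) (k := k)
    (isPreconnected_Ici.image (fun t : ℝ => z + t • u) (by fun_prop))
    (by rintro x hx ⟨t, -, rfl⟩; exact hzP t hx)
    (by
      rintro _ ⟨t, ht, rfl⟩ S hS
      obtain ⟨p, -, ⟨d, hd, rfl, -⟩, -⟩ := id hS
      exact hz t ht _ (Finset.mem_filter.2 ⟨List.mem_toFinset.2 (List.mem_map.2 ⟨d, hd, rfl⟩), hS⟩))
    (p := z) ⟨0, self_mem_Ici, by simp⟩ (by lia) ⟨t, ht, rfl⟩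
  rw [windingNumber_eq_zero P hD hD'.isClosed hPD htD] at hray
  lia

open Classical in
theorem three_mul_windingNumber_le_length (hD : Convex ℝ D) (hD' : IsCompact D)
    (hGD : G.support ⊆ D) (hc : ∀ ⦃x y⦄, G.Adj x y → c ∉ W.wall x y) (P : G.Walk u u) :
    3 * windingNumber c P ≤ P.length := by
  by_cases hP : P.Nil
  · simp [hP.eq_nil]
  have hPD : ∀ x ∈ P.support, x ∈ D := fun x hx => hGD (G.mem_support_of_mem_walk_support P hP hx)
  have hcount := calc
    3 * (windingNumber c P).toNat
      = ∑ k ∈ Finset.Icc 1 (windingNumber c P), 3 := by simp [mul_comm]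
    _ ≤ ∑ k ∈ Finset.Icc 1 (windingNumber c P),
          {S ∈ (W.wallsOf P).toFinset | W.Blocks P S k}.card :=
        Finset.sum_le_sum fun k hk => by
          rw [Finset.mem_Icc] at hk
          exact W.three_le_card_blocks hD hD' hPD hc hk.1 hk.2
    _ = ∑ S ∈ (W.wallsOf P).toFinset,
          {k ∈ Finset.Icc 1 (windingNumber c P) | W.Blocks P S k}.card :=
        (Finset.sum_card_bipartiteAbove_eq_sum_card_bipartiteBelow _).symm
    _ ≤ ∑ S ∈ (W.wallsOf P).toFinset, (W.wallsOf P).count S :=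
        Finset.sum_le_sum fun S _ => W.card_filter_blocks_le_count hD hD'.isClosed hPD S _
    _ = P.length := by
        rw [List.sum_toFinset_count_eq_length, wallsOf, List.length_map,
          SimpleGraph.Walk.length_darts]
  lia

end ConvexWalls

section Potential

variable {V : Type*} {G : SimpleGraph V} {w : V → V → ℝ}

theorem exists_potential
    (hw : ∀ u (P : G.Walk u u), 0 ≤ (P.darts.map fun d => w d.fst d.snd).sum) :
    ∃ h : V → ℝ, ∀ ⦃x y⦄, G.Adj x y → h y ≤ h x + w x y := by
  let weight {u v : V} (P : G.Walk u v) : ℝ := (P.darts.map fun d => w d.fst d.snd).sum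
  have weight_append {u v x : V} (P : G.Walk u v) (Q : G.Walk v x) :
      weight (P.append Q) = weight P + weight Q := by
    simp only [weight, SimpleGraph.Walk.darts_append, List.map_append, List.sum_append]
  have bddBelow (u v : V) : BddBelow (range fun P : G.Walk u v => weight P) := by
    by_cases huv : G.Reachable v u
    · obtain ⟨Q⟩ := huv
      refine ⟨-weight Q, ?_⟩
      rintro _ ⟨P, rfl⟩
      have h := hw u (P.append Q)
      change 0 ≤ weight _ at h
      rw [weight_append] at h
      exact neg_le_iff_add_nonneg'.2 (by rwa [add_comm] at h)
    · exact ⟨0, by rintro _ ⟨P, rfl⟩; exact absurd P.reachable.symm huv⟩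
  choose root hroot using fun C : G.ConnectedComponent => C.exists_rep
  refine ⟨fun x => ⨅ P : G.Walk (root (G.connectedComponentMk x)) x, weight P, fun x y hxy => ?_⟩
  have : Nonempty (G.Walk (root (G.connectedComponentMk x)) x) :=
    SimpleGraph.ConnectedComponent.exact (hroot _)
  dsimp only
  rw [← sub_le_iff_le_add, SimpleGraph.ConnectedComponent.sound hxy.symm.reachable]
  refine le_ciInf fun P => sub_le_iff_le_add.2 ?_
  calc
    _ ≤ weight (P.append hxy.toWalk) := ciInf_le (bddBelow _ y) _
    _ = weight P + w x y := by rw [weight_append]; simp [weight]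

end Potential

section Coloring

theorem abs_floor_sub_floor_le_one {a b : ℝ} (h : |b - a| ≤ 1) : |⌊b⌋ - ⌊a⌋| ≤ 1 := by
  obtain ⟨hl, hu⟩ := abs_le.1 h
  have hle : ⌊b⌋ ≤ ⌊a⌋ + 1 := by
    rw [← Int.floor_add_one]; exact Int.floor_mono (by linarith)
  have hge : ⌊a⌋ ≤ ⌊b⌋ + 1 := by
    rw [← Int.floor_add_one]; exact Int.floor_mono (by linarith)
  exact abs_le.2 ⟨by linarith, by linarith⟩

variable {E : Type*} [NormedAddCommGroup E] [InnerProductSpace ℝ E] [Fact (finrank ℝ E = 2)]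
  [Module.Oriented ℝ E (Fin 2)] {G : SimpleGraph E} {c : E}

theorem exists_viewAngle_eq_sub_add (c : E) :
    ∃ φ : E → ℝ, ∀ x ≠ c, ∀ y ≠ c, ∃ m : ℤ, viewAngle c x y = φ y - φ x + 2 * π * m := by
  have : Nontrivial E := nontrivial_of_finrank_eq_succ (Fact.out : finrank ℝ E = 2)
  obtain ⟨r, hr⟩ := exists_ne c
  refine ⟨viewAngle c r, fun x hx y hy => ?_⟩
  have h : (viewAngle c x y : Real.Angle) = (viewAngle c r y - viewAngle c r x : ℝ) := by
    rw [Real.Angle.coe_sub, coe_viewAngle, coe_viewAngle, coe_viewAngle, oangle_sub_left hr hx hy]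
  obtain ⟨m, hm⟩ := Real.Angle.angle_eq_iff_two_pi_dvd_sub.1 h
  exact ⟨m, by rw [← hm]; ring⟩

theorem exists_abs_sub_add_viewAngle_le (hc : ∀ ⦃x y⦄, G.Adj x y → c ∉ segment ℝ x y)
    (hG : ∀ u (P : G.Walk u u), 3 * windingNumber c P ≤ P.length) :
    ∃ h : E → ℝ, ∀ ⦃x y⦄, G.Adj x y → |h y - h x + 3 * viewAngle c x y / (2 * π)| ≤ 1 := by
  have sum_eq {u v : E} (P : G.Walk u v) :
      (P.darts.map fun d => 1 - 3 * viewAngle c d.fst d.snd / (2 * π)).sum =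
        P.length - 3 * turning c P / (2 * π) := by
    induction P with
    | nil => simp
    | cons h P ih =>
      rw [SimpleGraph.Walk.darts_cons, List.map_cons, List.sum_cons, ih, turning_cons,
        SimpleGraph.Walk.length_cons]
      push_cast
      ring
  obtain ⟨h, hh⟩ := exists_potential (G := G)
      (w := fun x y => 1 - 3 * viewAngle c x y / (2 * π)) fun u P => by
    rw [sum_eq]
    by_cases hP : P.Nil
    · simp [hP.eq_nil]
    · have hle : (3 * windingNumber c P : ℝ) ≤ P.length := by exact_mod_cast hG u P
      rw [turning_eq_two_pi_mul P (notMem_support_of_not_nil hP hc), mul_left_comm,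
        mul_div_cancel_left₀ _ two_pi_pos.ne']
      exact sub_nonneg.2 hle
  refine ⟨h, fun x y hxy => abs_le.2 ?_⟩
  have hxy' := hh hxy
  have hyx' := hh hxy.symm
  rw [viewAngle_swap fun hs => hc hxy hs.wbtw.mem_segment, mul_neg, neg_div] at hyx'
  constructor <;> linarith

theorem exists_coloring (hc : ∀ ⦃x y⦄, G.Adj x y → c ∉ segment ℝ x y)
    (hG : ∀ u (P : G.Walk u u), 3 * windingNumber c P ≤ P.length) :
    ∃ n : E → ZMod 3, ∀ ⦃x y z⦄, G.Adj x y → G.Adj y z → G.Adj z x →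
      ((n x ≠ n y ∧ n y ≠ n z ∧ n z ≠ n x) ↔ triangleAngle c x y z ≠ 0) := by
  obtain ⟨h, hh⟩ := exists_abs_sub_add_viewAngle_le hc hG
  obtain ⟨φ, hφ⟩ := exists_viewAngle_eq_sub_add c
  let n (x : E) : ℤ := ⌊h x + 3 * φ x / (2 * π)⌋
  have exists_step : ∀ ⦃x y⦄, G.Adj x y →
      ∃ m : ℤ, viewAngle c x y = φ y - φ x + 2 * π * m ∧ |n y + 3 * m - n x| ≤ 1 := by
    intro x y hxy
    obtain ⟨m, hm⟩ := hφ x (by rintro rfl; exact hc hxy (left_mem_segment ℝ _ _))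
      y (by rintro rfl; exact hc hxy (right_mem_segment ℝ _ _))
    refine ⟨m, hm, ?_⟩
    have hle := hh hxy
    have hfloor : n y + 3 * m = ⌊h y + 3 * φ y / (2 * π) + (3 * m : ℤ)⌋ :=
      (Int.floor_add_intCast _ _).symm
    rw [hfloor]
    refine abs_floor_sub_floor_le_one (le_of_eq_of_le (congrArg _ ?_) hle)
    rw [hm]
    push_cast
    field_simp
    ring
  refine ⟨fun x => n x, fun x y z hxy hyz hzx => ?_⟩
  obtain ⟨a, ha, hna⟩ := exists_step hxy
  obtain ⟨b, hb, hnb⟩ := exists_step hyz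
  obtain ⟨d, hd, hnd⟩ := exists_step hzx
  have htriangle : triangleAngle c x y z = 2 * π * (a + b + d : ℤ) := by
    rw [triangleAngle, ha, hb, hd]
    push_cast
    ring
  rw [htriangle, mul_ne_zero_iff_left two_pi_pos.ne', Int.cast_ne_zero]
  simp only [Ne, ZMod.intCast_eq_intCast_iff_dvd_sub, Nat.cast_ofNat]
  rw [abs_le] at hna hnb hnd
  omega

end Coloring

section Sides

variable {ι E : Type*} [NormedAddCommGroup E] [NormedSpace ℝ E] {c x y : E}

/-- The side opposite to the vertex `B i` of the simplex spanned by `B`. -/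
def side (B : AffineBasis ι ℝ E) (i : ι) : Set E :=
  {z ∈ convexHull ℝ (range B) | B.coord i z = 0}

theorem mem_side_of_mem_convexHull_image (B : AffineBasis ι ℝ E) {s : Set ι} {i : ι} (hi : i ∉ s)
    (hx : x ∈ convexHull ℝ (B '' s)) : x ∈ side B i := by
  refine ⟨convexHull_mono (image_subset_range B s) hx, ?_⟩
  refine convexHull_min (t := B.coord i ⁻¹' {0}) ?_ ((convex_singleton 0).affine_preimage _) hx
  rintro _ ⟨j, hj, rfl⟩
  exact B.coord_apply_ne fun h => hi (h ▸ hj)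

theorem convex_side (B : AffineBasis ι ℝ E) (i : ι) : Convex ℝ (side B i) :=
  (convex_convexHull ℝ _).inter ((convex_singleton (0 : ℝ)).affine_preimage (B.coord i))

theorem isExtreme_side (B : AffineBasis ι ℝ E) (i : ι) :
    IsExtreme ℝ (convexHull ℝ (range B)) (side B i) := by
  refine ⟨fun _ hz => hz.1, ?_⟩
  rintro x hx y hy z ⟨-, hz⟩ ⟨a, b, ha, hb, hab, rfl⟩
  have coord_nonneg : ∀ w ∈ convexHull ℝ (range B), 0 ≤ B.coord i w := fun w hw => by
    rw [B.convexHull_eq_nonneg_coord] at hw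
    exact hw i
  rw [Convex.combo_affine_apply hab, smul_eq_mul, smul_eq_mul] at hz
  exact ⟨hx, by nlinarith [coord_nonneg x hx, coord_nonneg y hy]⟩

theorem isClosed_side [Finite ι] (B : AffineBasis ι ℝ E) (i : ι) : IsClosed (side B i) :=
  have := B.finiteDimensional
  ((finite_range B).isClosed_convexHull ℝ).inter
    (isClosed_singleton.preimage (B.coord i).continuous_of_finiteDimensional)

theorem notMem_side [Finite ι] (B : AffineBasis ι ℝ E) (hc : c ∈ interior (convexHull ℝ (range B)))
    (i : ι) : c ∉ side B i := by
  rw [B.interior_convexHull] at hc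
  exact fun hci => (hc i).ne' hci.2

theorem side_subset_closure_compl [Finite ι] (B : AffineBasis ι ℝ E) (i : ι) :
    side B i ⊆ closure (convexHull ℝ (range B))ᶜ := by
  rw [closure_compl]
  exact fun z hz hint => notMem_side B hint i hz

theorem notMem_convexHull_range_diff [Finite ι] (B : AffineBasis ι ℝ E)
    (hc : c ∈ interior (convexHull ℝ (range B))) :
    ∀ x ∈ range B, c ∉ convexHull ℝ (range B \ {x}) := by
  rintro _ ⟨i, rfl⟩ hmem
  refine notMem_side B hc i (mem_side_of_mem_convexHull_image B (s := {i}ᶜ) (fun h => h rfl)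
    (convexHull_mono ?_ hmem))
  rintro _ ⟨⟨j, rfl⟩, hj⟩
  exact ⟨j, fun h => hj (congrArg B h), rfl⟩

theorem eq_of_mem_side (B : AffineBasis (Fin 3) ℝ E) {i j : Fin 3} (hxy : x ≠ y)
    (hxi : x ∈ side B i) (hyi : y ∈ side B i) (hxj : x ∈ side B j) (hyj : y ∈ side B j) :
    i = j := by
  by_contra hij
  refine hxy (B.ext_elem fun k => ?_)
  have hx := B.sum_coord_apply_eq_one x
  have hy := B.sum_coord_apply_eq_one y
  rw [Fin.sum_univ_three] at hx hy
  have := hxi.2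
  have := hyi.2
  have := hxj.2
  have := hyj.2
  fin_cases i <;> fin_cases j <;> fin_cases k <;> simp_all

end Sides

section Chords

variable {E : Type*} [NormedAddCommGroup E] [NormedSpace ℝ E]
  {K : SimplicialComplex ℝ E} {B : AffineBasis (Fin 3) ℝ E} {c p x y x' y' : E}

theorem subset_of_mem_convexHull {s t : Finset E} (hs : s ∈ K.faces) (ht : t ∈ K.faces)
    {A A' : Set E} (hA : A ⊆ s) (hA' : A' ⊆ t) (hp : p ∈ convexHull ℝ A)
    (hp' : p ∈ convexHull ℝ A') (hmin : ∀ x ∈ A, p ∉ convexHull ℝ (A \ {x})) : A ⊆ A' := by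
  lift A to Finset E using s.finite_toSet.subset hA
  lift A' to Finset E using t.finite_toSet.subset hA'
  have hAK : A ∈ K.faces := K.down_closed hs (Finset.coe_subset.1 hA)
    (Finset.coe_nonempty.1 (convexHull_nonempty_iff.1 ⟨p, hp⟩))
  have hAK' : A' ∈ K.faces := K.down_closed ht (Finset.coe_subset.1 hA')
    (Finset.coe_nonempty.1 (convexHull_nonempty_iff.1 ⟨p, hp'⟩))
  intro x hx
  by_contra hx'
  refine hmin x hx (convexHull_mono ?_ (K.inter_subset_convexHull hAK hAK' ⟨hp, hp'⟩))
  rintro z ⟨hz, hz'⟩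
  exact ⟨hz, by rintro rfl; exact hx' hz'⟩

theorem notMem_convexHull_pair_diff (hxy : x ≠ y) (hp : p ∈ openSegment ℝ x y) :
    ∀ z ∈ ({x, y} : Set E), p ∉ convexHull ℝ ({x, y} \ {z}) := by
  rintro z (rfl | rfl) hmem
  · have : p ∈ convexHull ℝ {y} := convexHull_mono (by grind) hmem
    rw [convexHull_singleton, mem_singleton_iff] at this
    exact hxy (right_mem_openSegment_iff.1 (this ▸ hp))
  · have : p ∈ convexHull ℝ {x} := convexHull_mono (by grind) hmem
    rw [convexHull_singleton, mem_singleton_iff] at this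
    exact hxy (left_mem_openSegment_iff.1 (this ▸ hp))

variable (K B) in
/-- The graph joining two points of the plane when they are vertices of a common face of the complex
`K` or lie on a common side of the triangle `B`. The extra edges along the sides turn the Sperner
condition into a condition on the triangles of the graph. -/
def chordGraph : SimpleGraph E where
  Adj x y := x ≠ y ∧ ((∃ s ∈ K.faces, x ∈ s ∧ y ∈ s) ∨ ∃ i, x ∈ side B i ∧ y ∈ side B i)
  symm := ⟨fun _ _ h => ⟨h.1.symm, h.2.imp (fun ⟨s, hs, h⟩ => ⟨s, hs, h.symm⟩)
    fun ⟨i, h⟩ => ⟨i, h.symm⟩⟩⟩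
  loopless := ⟨fun _ h => h.1 rfl⟩

theorem chordGraph_support_subset (hK : K.vertices ⊆ convexHull ℝ (range B)) :
    (chordGraph K B).support ⊆ convexHull ℝ (range B) := by
  rintro x ⟨y, -, ⟨s, hs, hx, -⟩ | ⟨i, hx, -⟩⟩
  · exact hK (by rw [K.vertices_eq]; exact mem_biUnion hs hx)
  · exact hx.1

theorem mem_side_of_openSegment_inter (hK : K.vertices ⊆ convexHull ℝ (range B))
    (h : (chordGraph K B).Adj x y) {i : Fin 3} (hp : p ∈ openSegment ℝ x y) (hpi : p ∈ side B i) :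
    x ∈ side B i ∧ y ∈ side B i := by
  have hx := chordGraph_support_subset hK ⟨y, h⟩
  have hy := chordGraph_support_subset hK ⟨x, h.symm⟩
  exact ⟨(isExtreme_side B i).left_mem_of_mem_openSegment hx hy hpi hp,
    (isExtreme_side B i).left_mem_of_mem_openSegment hy hx hpi (openSegment_symm ℝ x y ▸ hp)⟩

theorem pair_subset_of_openSegment_inter {s t : Finset E} (hs : s ∈ K.faces) (ht : t ∈ K.faces)
    (hx : x ∈ s) (hy : y ∈ s) (hxy : x ≠ y) {A : Set E} (hA : A ⊆ t)
    (hp : p ∈ openSegment ℝ x y) (hpA : p ∈ convexHull ℝ A) : {x, y} ⊆ A :=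
  subset_of_mem_convexHull hs ht (pair_subset hx hy) hA
    (convexHull_pair (𝕜 := ℝ) x y ▸ openSegment_subset_segment ℝ x y hp) hpA
    (notMem_convexHull_pair_diff hxy hp)

open Classical in
variable (B) in
/-- The side of the triangle `B` containing both `x` and `y`, or the segment from `x` to `y` if
there is no such side. -/
noncomputable def chordWall (x y : E) : Set E :=
  if h : ∃ i, x ∈ side B i ∧ y ∈ side B i then side B h.choose else segment ℝ x y

theorem chordWall_cases (B : AffineBasis (Fin 3) ℝ E) (x y : E) :
    (∃ i, x ∈ side B i ∧ y ∈ side B i ∧ chordWall B x y = side B i) ∨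
      (¬∃ i, x ∈ side B i ∧ y ∈ side B i) ∧ chordWall B x y = segment ℝ x y := by
  by_cases h : ∃ i, x ∈ side B i ∧ y ∈ side B i
  · exact .inl ⟨h.choose, h.choose_spec.1, h.choose_spec.2, dif_pos h⟩
  · exact .inr ⟨h, dif_neg h⟩

theorem chordWall_eq (hK : K.vertices ⊆ convexHull ℝ (range B))
    (h : (chordGraph K B).Adj x y) (h' : (chordGraph K B).Adj x' y')
    (hp : p ∈ openSegment ℝ x y) (hp' : p ∈ openSegment ℝ x' y') :
    chordWall B x y = chordWall B x' y' := by
  rcases chordWall_cases B x y with ⟨i, hx, hy, heq⟩ | ⟨hside, heq⟩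
  · have hpi := (convex_side B i).openSegment_subset hx hy hp
    obtain ⟨hx', hy'⟩ := mem_side_of_openSegment_inter hK h' hp' hpi
    rcases chordWall_cases B x' y' with ⟨j, hxj, hyj, heq'⟩ | ⟨hside', -⟩
    · rw [heq, heq', eq_of_mem_side B h'.1 hx' hy' hxj hyj]
    · exact absurd ⟨i, hx', hy'⟩ hside'
  · rcases chordWall_cases B x' y' with ⟨i, hx', hy', -⟩ | ⟨hside', heq'⟩
    · have hpi := (convex_side B i).openSegment_subset hx' hy' hp'
      exact absurd ⟨i, mem_side_of_openSegment_inter hK h hp hpi⟩ hside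
    · obtain ⟨s, hs, hx, hy⟩ := h.2.resolve_right hside
      obtain ⟨t, ht, hx', hy'⟩ := h'.2.resolve_right hside'
      have hmem := convexHull_pair (𝕜 := ℝ) x y ▸ openSegment_subset_segment ℝ x y hp
      have hmem' := convexHull_pair (𝕜 := ℝ) x' y' ▸ openSegment_subset_segment ℝ x' y' hp'
      have hpair : ({x, y} : Set E) = {x', y'} :=
        (pair_subset_of_openSegment_inter hs ht hx hy h.1 (pair_subset hx' hy') hp hmem').antisymm
          (pair_subset_of_openSegment_inter ht hs hx' hy' h'.1 (pair_subset hx hy) hp' hmem)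
      rw [heq, heq', ← convexHull_pair, hpair, convexHull_pair]

theorem chordWall_outer_or_inner (hK : K.vertices ⊆ convexHull ℝ (range B))
    (h : (chordGraph K B).Adj x y) : chordWall B x y ⊆ closure (convexHull ℝ (range B))ᶜ ∨
      chordWall B x y = segment ℝ x y ∧ ∀ z ∈ (chordGraph K B).support, z ∉ openSegment ℝ x y := by
  rcases chordWall_cases B x y with ⟨i, -, -, heq⟩ | ⟨hside, heq⟩
  · exact .inl (heq ▸ side_subset_closure_compl B i)
  · refine .inr ⟨heq, ?_⟩
    rintro z ⟨w, -, ⟨t, ht, hz, -⟩ | ⟨i, hz, -⟩⟩ hzxy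
    · obtain ⟨s, hs, hx, hy⟩ := h.2.resolve_right hside
      have hsub := pair_subset_of_openSegment_inter hs ht hx hy h.1 (singleton_subset_iff.2 hz)
        hzxy (subset_convexHull ℝ _ rfl)
      exact h.1 ((hsub (mem_insert x _)).trans (hsub (mem_insert_of_mem x rfl)).symm)
    · exact hside ⟨i, mem_side_of_openSegment_inter hK h hzxy hz⟩

/-- The walls of the chord graph: the three sides of the triangle, and the interior edges. -/
noncomputable def chordWalls (hK : K.vertices ⊆ convexHull ℝ (range B)) :
    ConvexWalls (chordGraph K B) (convexHull ℝ (range B)) where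
  wall := chordWall B
  segment_subset {x y} _ := by
    rcases chordWall_cases B x y with ⟨i, hx, hy, heq⟩ | ⟨-, heq⟩
    · exact heq ▸ (convex_side B i).segment_subset hx hy
    · exact heq.ge
  convex {x y} _ := by
    rcases chordWall_cases B x y with ⟨i, -, -, heq⟩ | ⟨-, heq⟩
    · exact heq ▸ convex_side B i
    · exact heq ▸ convex_segment x y
  isClosed {x y} _ := by
    rcases chordWall_cases B x y with ⟨i, -, -, heq⟩ | ⟨-, heq⟩
    · exact heq ▸ isClosed_side B i
    · rw [heq, ← convexHull_pair]
      exact (toFinite {x, y}).isClosed_convexHull ℝ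
  wall_eq := chordWall_eq hK
  outer_or_inner := chordWall_outer_or_inner hK

theorem notMem_chordWall (hcB : c ∈ interior (convexHull ℝ (range B)))
    (hcK : ∀ s ∈ K.faces, ∀ x ∈ s, ∀ y ∈ s, c ∉ segment ℝ x y) (h : (chordGraph K B).Adj x y) :
    c ∉ chordWall B x y := by
  rcases chordWall_cases B x y with ⟨i, -, -, heq⟩ | ⟨hside, heq⟩
  · exact heq ▸ notMem_side B hcB i
  · obtain ⟨s, hs, hx, hy⟩ := h.2.resolve_right hside
    exact heq ▸ hcK s hs x hx y hy

theorem chordGraph_adj_vertices {i j : Fin 3} (hij : i ≠ j) : (chordGraph K B).Adj (B i) (B j) := by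
  obtain ⟨k, hki, hkj⟩ : ∃ k, k ≠ i ∧ k ≠ j := by decide +revert
  have mem_side {m : Fin 3} (hm : k ≠ m) : B m ∈ side B k :=
    ⟨subset_convexHull ℝ _ (mem_range_self m), B.coord_apply_ne hm⟩
  exact ⟨B.ind.injective.ne hij, .inr ⟨k, mem_side hki, mem_side hkj⟩⟩

end Chords

section Labelling

variable {E : Type*} [NormedAddCommGroup E] [InnerProductSpace ℝ E] [Fact (finrank ℝ E = 2)]

theorem exists_affineBasis_coe_eq {p : Fin 3 → E} (hp : AffineIndependent ℝ p) :
    ∃ B : AffineBasis (Fin 3) ℝ E, ⇑B = p :=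
  have : FiniteDimensional ℝ E := .of_fact_finrank_eq_two
  ⟨⟨p, hp, hp.affineSpan_eq_top_iff_card_eq_finrank_add_one.2 (by
    rw [(Fact.out : finrank ℝ E = 2), Fintype.card_fin])⟩, rfl⟩

theorem exists_affineBasis_range_eq {s : Finset E} (hs : AffineIndependent ℝ ((↑) : s → E))
    (hcard : s.card = 3) : ∃ B : AffineBasis (Fin 3) ℝ E, range B = s := by
  let e : Fin 3 ≃ s := (s.equivFinOfCardEq hcard).symm
  obtain ⟨B, hB⟩ := exists_affineBasis_coe_eq (hs.comp_embedding e.toEmbedding)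
  refine ⟨B, ?_⟩
  rw [hB, range_comp]
  simp

theorem injOn_triple_iff {α β : Type*} {f : α → β} {x y z : α} (hxy : x ≠ y) (hyz : y ≠ z)
    (hzx : z ≠ x) : InjOn f {x, y, z} ↔ f x ≠ f y ∧ f y ≠ f z ∧ f z ≠ f x := by
  rw [injOn_insert (by grind), injOn_pair]
  grind

theorem exists_mem_interior_forall_subset {K : SimplicialComplex ℝ E} {σ : Finset E}
    (hσ : σ ∈ K.faces) (hcard : σ.card = 3) :
    ∃ c ∈ interior (convexHull ℝ (σ : Set E)),
      ∀ τ ∈ K.faces, ∀ A ⊆ τ, c ∈ convexHull ℝ (A : Set E) → σ ⊆ A := by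
  obtain ⟨B, hB⟩ := exists_affineBasis_range_eq (K.indep hσ) hcard
  have hc := hB ▸ B.centroid_mem_interior_convexHull
  refine ⟨_, hc, fun τ hτ A hA hcA => Finset.coe_subset.1 ?_⟩
  exact subset_of_mem_convexHull hσ hτ subset_rfl (Finset.coe_subset.2 hA) (interior_subset hc) hcA
    (hB ▸ notMem_convexHull_range_diff B (hB ▸ hc))

variable [Module.Oriented ℝ E (Fin 2)] {K : SimplicialComplex ℝ E} {B : AffineBasis (Fin 3) ℝ E}
  {c : E}

theorem exists_labelling_injOn_iff (hK : K.vertices ⊆ convexHull ℝ (range B))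
    (hcB : c ∈ interior (convexHull ℝ (range B)))
    (hcK : ∀ s ∈ K.faces, ∀ x ∈ s, ∀ y ∈ s, c ∉ segment ℝ x y) :
    ∃ l : E → Fin 3, (∀ i, l (B i) = i) ∧ ∀ ⦃x y z⦄, (chordGraph K B).Adj x y →
      (chordGraph K B).Adj y z → (chordGraph K B).Adj z x →
        (InjOn l {x, y, z} ↔ triangleAngle c x y z ≠ 0) := by
  have hc := fun x y (h : (chordGraph K B).Adj x y) => notMem_chordWall hcB hcK h
  obtain ⟨n, hn⟩ := exists_coloring
    (fun x y h hmem => hc x y h ((chordWalls hK).segment_subset h hmem))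
    (fun _ P => (chordWalls hK).three_mul_windingNumber_le_length (convex_convexHull ℝ _)
      ((finite_range B).isCompact_convexHull ℝ) (chordGraph_support_subset hK) hc P)
  have injective_n : Function.Injective (n ∘ B) := by
    have h := (hn (chordGraph_adj_vertices (by decide)) (chordGraph_adj_vertices (by decide))
      (chordGraph_adj_vertices (by decide))).2 (triangleAngle_ne_zero B hcB)
    intro i j hij
    fin_cases i <;> fin_cases j <;> grind
  let e : Fin 3 ≃ ZMod 3 := .ofBijective (n ∘ B)
    ((Fintype.bijective_iff_injective_and_card _).2 ⟨injective_n, by simp⟩)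
  refine ⟨e.symm ∘ n, fun i => e.symm_apply_apply i, fun x y z hxy hyz hzx => ?_⟩
  rw [injOn_triple_iff hxy.1 hyz.1 hzx.1, ← hn hxy hyz hzx]
  simp only [Function.comp_apply, e.symm.injective.ne_iff]

theorem mem_of_mem_convexHull_image {l : E → Fin 3}
    (hcB : c ∈ interior (convexHull ℝ (range B))) (hl : ∀ i, l (B i) = i)
    (hangle : ∀ ⦃x y z⦄, (chordGraph K B).Adj x y → (chordGraph K B).Adj y z →
      (chordGraph K B).Adj z x → InjOn l {x, y, z} → triangleAngle c x y z ≠ 0)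
    {x : E} {s : Set (Fin 3)} (hx : x ∈ convexHull ℝ (B '' s)) : l x ∈ s := by
  by_contra hlx
  have hxl : x ∈ side B (l x) := mem_side_of_mem_convexHull_image B hlx hx
  obtain ⟨j, k, hj, hk, hjk⟩ : ∃ j k, j ≠ l x ∧ k ≠ l x ∧ j ≠ k := by
    generalize l x = i
    decide +revert
  have vertex_mem {i : Fin 3} (hi : i ≠ l x) : B i ∈ side B (l x) :=
    mem_side_of_mem_convexHull_image B (s := {i}) hi.symm (subset_convexHull ℝ _ (by simp))
  have vertex_ne {i : Fin 3} (hi : i ≠ l x) : x ≠ B i := fun h => hi (by rw [h, hl])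
  have angle_ne : triangleAngle c x (B j) (B k) ≠ 0 :=
    hangle ⟨vertex_ne hj, .inr ⟨_, hxl, vertex_mem hj⟩⟩ (chordGraph_adj_vertices hjk)
      ⟨(vertex_ne hk).symm, .inr ⟨_, vertex_mem hk, hxl⟩⟩
      ((injOn_triple_iff (vertex_ne hj) (B.ind.injective.ne hjk) (vertex_ne hk).symm).2
        (by rw [hl, hl]; exact ⟨hj.symm, hjk, hk⟩))
  refine angle_ne (triangleAngle_eq_zero fun hmem => notMem_side B hcB (l x) ?_)
  refine convexHull_min ?_ (convex_side B (l x)) hmem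
  rintro z (rfl | rfl | rfl)
  exacts [hxl, vertex_mem hj, vertex_mem hk]

theorem exists_sperner_labelling (hK : K.vertices ⊆ convexHull ℝ (range B))
    (hcB : c ∈ interior (convexHull ℝ (range B)))
    (hcK : ∀ s ∈ K.faces, ∀ x ∈ s, ∀ y ∈ s, c ∉ segment ℝ x y) :
    ∃ l : E → Fin 3, (∀ i, l (B i) = i) ∧
      (∀ x, ∀ s : Set (Fin 3), x ∈ convexHull ℝ (B '' s) → l x ∈ s) ∧
      ∀ τ ∈ K.faces, τ.card = 3 →
        (c ∈ interior (convexHull ℝ (τ : Set E)) → Rainbow l τ) ∧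
          (Rainbow l τ → c ∈ convexHull ℝ (τ : Set E)) := by
  classical
  obtain ⟨l, hl, hangle⟩ := exists_labelling_injOn_iff hK hcB hcK
  have rainbow_iff {τ : Finset E} {x y z : E} (hτ : τ ∈ K.faces)
      (hxyz : (τ : Set E) = {x, y, z}) (hxy : x ≠ y) (hyz : y ≠ z) (hzx : z ≠ x) :
      Rainbow l τ ↔ triangleAngle c x y z ≠ 0 := by
    have hmem (w : E) : w ∈ τ ↔ w = x ∨ w = y ∨ w = z := by rw [← Finset.mem_coe, hxyz]; rfl
    rw [Rainbow, hxyz]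
    exact hangle ⟨hxy, .inl ⟨τ, hτ, by simp [hmem]⟩⟩ ⟨hyz, .inl ⟨τ, hτ, by simp [hmem]⟩⟩
      ⟨hzx, .inl ⟨τ, hτ, by simp [hmem]⟩⟩
  refine ⟨l, hl, fun x s hx => mem_of_mem_convexHull_image hcB hl
    (fun x y z hxy hyz hzx => (hangle hxy hyz hzx).1) hx, fun τ hτ hcard => ⟨fun hc => ?_, ?_⟩⟩
  · obtain ⟨B', hB'⟩ := exists_affineBasis_range_eq (K.indep hτ) hcard
    have hrange : (τ : Set E) = {B' 0, B' 1, B' 2} := by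
      rw [← hB', ← image_univ]
      ext x
      simp [Fin.exists_fin_succ, eq_comm]
    have vertex_ne {i j : Fin 3} (hij : i ≠ j) : B' i ≠ B' j := B'.ind.injective.ne hij
    exact (rainbow_iff hτ hrange (vertex_ne (by decide)) (vertex_ne (by decide))
      (vertex_ne (by decide))).2 (triangleAngle_ne_zero B' (hB' ▸ hc))
  · obtain ⟨x, y, z, hxy, hxz, hyz, rfl⟩ := Finset.card_eq_three.1 hcard
    have hcoe : (({x, y, z} : Finset E) : Set E) = {x, y, z} := by simp
    rw [rainbow_iff hτ hcoe hxy hyz hxz.symm, hcoe]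
    exact not_imp_comm.1 triangleAngle_eq_zero

end Labelling

theorem sperner_2d_unique_rainbow_general {E : Type*} [NormedAddCommGroup E]
    [InnerProductSpace ℝ E] (hE : finrank ℝ E = 2) {K : SimplicialComplex ℝ E}
    {corner : Fin 3 → E} (hcorner : AffineIndependent ℝ corner)
    (hK : K.vertices ⊆ convexHull ℝ (range corner)) {σ : Finset E} (hσ : σ ∈ K.faces)
    (hcard : σ.card = 3) :
    ∃ l : E → Fin 3, (∀ i, l (corner i) = i) ∧
      (∀ x, ∀ s : Set (Fin 3), x ∈ convexHull ℝ (corner '' s) → l x ∈ s) ∧ Rainbow l σ ∧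
      ∀ τ ∈ K.faces, τ.card = 3 → Rainbow l τ → τ = σ := by
  classical
  have : Fact (finrank ℝ E = 2) := ⟨hE⟩
  have : FiniteDimensional ℝ E := .of_fact_finrank_eq_two
  let : Module.Oriented ℝ E (Fin 2) := ⟨(finBasisOfFinrankEq ℝ E hE).orientation⟩
  obtain ⟨B, rfl⟩ := exists_affineBasis_coe_eq hcorner
  obtain ⟨c, hcσ, hcK⟩ := exists_mem_interior_forall_subset hσ hcard
  have hσK : (σ : Set E) ⊆ K.vertices := by
    rw [K.vertices_eq]
    exact subset_biUnion_of_mem (u := fun s : Finset E => (s : Set E)) hσ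
  have hcB : c ∈ interior (convexHull ℝ (range B)) :=
    interior_mono (convexHull_min (hσK.trans hK) (convex_convexHull ℝ _)) hcσ
  have notMem_segment : ∀ s ∈ K.faces, ∀ x ∈ s, ∀ y ∈ s, c ∉ segment ℝ x y := by
    intro s hs x hx y hy hc
    have hsub : σ ⊆ {x, y} := hcK s hs {x, y} (by simp [Finset.insert_subset_iff, hx, hy])
      (by rwa [Finset.coe_pair, convexHull_pair])
    have := (Finset.card_le_card hsub).trans Finset.card_le_two
    lia
  obtain ⟨l, hl, hface, hrainbow⟩ := exists_sperner_labelling hK hcB notMem_segment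
  refine ⟨l, hl, hface, (hrainbow σ hσ hcard).1 hcσ, fun τ hτ hτcard hτl => ?_⟩
  have hsub : σ ⊆ τ := hcK τ hτ τ subset_rfl ((hrainbow τ hτ hτcard).2 hτl)
  exact (Finset.eq_of_subset_of_card_le hsub (by rw [hcard, hτcard])).symm

/-- Theorem 1.3: for every triangulation `K` of `Δ²` and every facet `σ` of `K`,
there is a Sperner labelling of `K` in which `σ` is the unique rainbow facet. -/
theorem sperner_2d_unique_rainbow (T : SimplexTriangulation 2)
    (σ : Finset (EuclideanSpace ℝ (Fin 2))) (hσ : T.IsFacet σ) :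
    ∃ l : EuclideanSpace ℝ (Fin 2) → Fin 3, T.IsSperner l ∧ Rainbow l σ ∧
      ∀ τ, T.IsFacet τ → Rainbow l τ → τ = σ := by
  have hE : finrank ℝ (EuclideanSpace ℝ (Fin 2)) = 2 := finrank_euclideanSpace_fin
  obtain ⟨l, hcorner, hface, hσl, hunique⟩ := sperner_2d_unique_rainbow_general hE T.indep
    (T.K.vertices_subset_space.trans T.space_eq.le) hσ.1 hσ.2
  exact ⟨l, ⟨hcorner, fun x _ s hx => ⟨l x, hface x s hx, rfl⟩⟩, hσl,
    fun τ hτ => hunique τ hτ.1 hτ.2⟩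
end

section
/- For every d ≥ 3 there exists a finite triangulation K of the d-simplex Δ^d and a facet σ of K such that every Sperner labelling of K has a rainbow facet distinct from σ; consequently, by Proposition (criticality equivalence), Gallai's graph G_K is (d+2)-chromatic but not (d+2)-critical. -/
open Geometry

namespace SimplexTriangulation

variable {d : ℕ}

/-- Vertices of Gallai's graph `G_K`: (V1) vertices of `K`, (V2) a vertex `v_ρ`
for each facet `ρ` of `K`, (V3) a vertex `w_σ` for each of the `d+1` facets of
`Δ^d` (indexed by the opposite corner). -/
def GallaiVertex (T : SimplexTriangulation d) : Type :=
  ↥T.K.vertices ⊕ {σ // T.IsFacet σ} ⊕ Fin (d + 1)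

/-- The generating relation of Gallai's graph: `u ∼ v_ρ` when `u ∈ ρ`;
`u ∼ w_j` when `u` lies in the facet of `Δ^d` opposite to corner `j`;
and all pairs of type-(V3) vertices are adjacent. -/
def gallaiRel (T : SimplexTriangulation d) :
    T.GallaiVertex → T.GallaiVertex → Prop
  | Sum.inl u, Sum.inr (Sum.inl ρ) => (u : EuclideanSpace ℝ (Fin d)) ∈ ρ.1
  | Sum.inl u, Sum.inr (Sum.inr j) =>
      (u : EuclideanSpace ℝ (Fin d)) ∈ convexHull ℝ (T.corner '' {i | i ≠ j})
  | Sum.inr (Sum.inr _), Sum.inr (Sum.inr _) => True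
  | _, _ => False

/-- Gallai's graph `G_K` associated with a triangulation `K` of `Δ^d`. -/
def GallaiGraph (T : SimplexTriangulation d) : SimpleGraph T.GallaiVertex :=
  SimpleGraph.fromRel (gallaiRel T)

end SimplexTriangulation

/-!
In a colouring of `G_K - v_σ` with `d + 1` colours the vertices of type (V3) use every colour once,
so that the colours of the vertices of `K` form a Sperner labelling in which no facet other than `σ`
is rainbow. If every Sperner labelling has a rainbow facet other than `σ`, then `G_K - v_σ` still
needs `d + 2` colours, and deleting a single edge at `v_σ` cannot lower the chromatic number.

For `d = 3` there is such a triangulation with 12 vertices. It is regular, so being a triangulation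
amounts to inequalities between determinants, and a backtracking search through its Sperner
labellings always meets a rainbow tetrahedron other than the special one. For larger `d` one passes
to the join with the remaining corners: a Sperner labelling gives each of them its own label, and
labels the tetrahedron by its own corners, so a rainbow tetrahedron extends to a rainbow facet.
-/

/-! ### Barycentric coordinates -/

section AffineBasis

variable {ι E : Type*} [AddCommGroup E] [Module ℝ E]

theorem affineMap_nonneg_of_mem_convexHull {A : E →ᵃ[ℝ] ℝ} {S : Set E} (hS : ∀ y ∈ S, 0 ≤ A y)
    {x : E} (hx : x ∈ convexHull ℝ S) : 0 ≤ A x :=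
  convexHull_min (t := A ⁻¹' Set.Ici 0) hS ((convex_Ici 0).affine_preimage _) hx

theorem mem_convexHull_image_iff_coord [Finite ι] (b : AffineBasis ι ℝ E) {s : Set ι} {x : E} :
    x ∈ convexHull ℝ (b '' s) ↔ (∀ i, 0 ≤ b.coord i x) ∧ ∀ i, b.coord i x ≠ 0 → i ∈ s := by
  constructor
  · refine fun hx => ⟨?_, fun i => ?_⟩
    · have := convexHull_mono (Set.image_subset_range b s) hx
      rwa [b.convexHull_eq_nonneg_coord] at this
    · contrapose!
      intro hi
      have hface : b '' s ⊆ b.coord i ⁻¹' {0} := by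
        rintro _ ⟨j, hj, rfl⟩
        exact b.coord_apply_ne fun hij => hi (hij ▸ hj)
      exact convexHull_min hface ((convex_singleton 0).affine_preimage _) hx
  · rintro ⟨hnonneg, hs⟩
    classical
    cases nonempty_fintype ι
    have hsum : ∑ i with b.coord i x ≠ 0, b.coord i x = 1 := by
      rw [Finset.sum_filter_ne_zero, b.sum_coord_apply_eq_one]
    have hx : ∑ i with b.coord i x ≠ 0, b.coord i x • b i = x := by
      conv_rhs => rw [← b.linear_combination_coord_eq_self x]
      exact Finset.sum_filter_of_ne fun i _ h h0 => h (by rw [h0, zero_smul])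
    rw [← hx]
    exact (convex_convexHull ℝ _).sum_mem (fun i _ => hnonneg i) hsum fun i hi =>
      subset_convexHull ℝ _ (Set.mem_image_of_mem b (hs i (Finset.mem_filter.1 hi).2))

variable [Fintype ι] (b : AffineBasis ι ℝ E)

theorem affineMap_apply_eq_sum_coord (A : E →ᵃ[ℝ] ℝ) (x : E) :
    A x = ∑ i, b.coord i x * A (b i) := by
  have hw : ∑ i, b.coord i x = 1 := b.sum_coord_apply_eq_one x
  conv_lhs => rw [← b.affineCombination_coord_eq_self x, Finset.map_affineCombination _ _ _ hw,
    Finset.affineCombination_eq_linear_combination _ _ _ hw]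
  rfl

theorem coord_affineCombination {w : ι → ℝ} (hw : ∑ i, w i = 1) (i : ι) :
    b.coord i (Finset.univ.affineCombination ℝ b w) = w i :=
  b.coord_apply_combination_of_mem (Finset.mem_univ i) hw

end AffineBasis

/-! ### Regular triangulations -/

/-- A triangulation of `convexHull ℝ S` presented by heights: the vertices `v : V` have positions
`point v` and heights `height v`, and the maximal simplices are those whose affine interpolation of
the heights lies strictly below the height of every other vertex. The maximal simplex `f : F` has
the vertices `facet f i`, and `basis f` records that these are affinely independent and span `E`.
The field `ridge` says that opposite to each vertex of a maximal simplex there is another maximal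
simplex or the boundary. -/
structure RegularTriangulation (V F ι : Type*) {E : Type*} [Fintype ι] [AddCommGroup E]
    [Module ℝ E] (S : Set E) where
  point : V → E
  height : V → ℝ
  facet : F → ι → V
  basis : F → AffineBasis ι ℝ E
  basis_apply : ∀ f i, basis f i = point (facet f i)
  exists_facet_eq : ∀ v, ∃ f i, facet f i = v
  point_mem : ∀ v, point v ∈ convexHull ℝ S
  sum_height_lt : ∀ f v, v ∉ Set.range (facet f) →
    ∑ i, (basis f).coord i (point v) * height (facet f i) < height v
  ridge : ∀ f i,
    (∃ g, (∀ j ≠ i, facet f j ∈ Set.range (facet g)) ∧ facet f i ∉ Set.range (facet g)) ∨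
      ∀ x ∈ S, 0 ≤ (basis f).coord i x

namespace RegularTriangulation

variable {V F ι E : Type*} [Fintype ι] [AddCommGroup E] [Module ℝ E] {S : Set E}
  (R : RegularTriangulation V F ι S)

/-- The affine function that takes the prescribed heights at the vertices of the simplex `f`. -/
noncomputable def interpolation (f : F) : E →ᵃ[ℝ] ℝ :=
  (Fintype.linearCombination ℝ fun i => R.height (R.facet f i)).toAffineMap.comp (R.basis f).coords

theorem interpolation_apply (f : F) (x : E) :
    R.interpolation f x = ∑ i, (R.basis f).coord i x * R.height (R.facet f i) :=
  rfl

theorem interpolation_eq_height {f : F} {v : V} (hv : v ∈ Set.range (R.facet f)) :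
    R.interpolation f (R.point v) = R.height v := by
  classical
  obtain ⟨j, rfl⟩ := hv
  simp [interpolation_apply, ← R.basis_apply, AffineBasis.coord_apply]

theorem interpolation_lt_height {f : F} {v : V} (hv : v ∉ Set.range (R.facet f)) :
    R.interpolation f (R.point v) < R.height v :=
  R.sum_height_lt f v hv

theorem interpolation_le_height (f : F) (v : V) : R.interpolation f (R.point v) ≤ R.height v := by
  by_cases hv : v ∈ Set.range (R.facet f)
  · exact (R.interpolation_eq_height hv).le
  · exact (R.interpolation_lt_height hv).le

theorem interpolation_eq_sum (f g : F) (x : E) :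
    R.interpolation f x =
      ∑ i, (R.basis g).coord i x * R.interpolation f (R.point (R.facet g i)) := by
  simpa only [R.basis_apply] using affineMap_apply_eq_sum_coord (R.basis g) (R.interpolation f) x

theorem interpolation_le_interpolation (f : F) {g : F} {x : E}
    (hg : ∀ i, 0 ≤ (R.basis g).coord i x) : R.interpolation f x ≤ R.interpolation g x := by
  rw [R.interpolation_eq_sum f g, R.interpolation_apply g]
  exact Finset.sum_le_sum fun i _ =>
    mul_le_mul_of_nonneg_left (R.interpolation_le_height f _) (hg i)

theorem facet_mem_range_of_coord_ne_zero {f g : F} {x : E}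
    (hf : ∀ i, 0 ≤ (R.basis f).coord i x) (hg : ∀ i, 0 ≤ (R.basis g).coord i x) {i : ι}
    (hi : (R.basis f).coord i x ≠ 0) : R.facet f i ∈ Set.range (R.facet g) := by
  by_contra hn
  have hlt : R.interpolation g x < R.interpolation f x := by
    rw [R.interpolation_eq_sum g f, R.interpolation_apply f]
    exact Finset.sum_lt_sum
      (fun j _ => mul_le_mul_of_nonneg_left (R.interpolation_le_height g _) (hf j))
      ⟨i, Finset.mem_univ i,
        mul_lt_mul_of_pos_left (R.interpolation_lt_height hn) ((hf i).lt_of_ne' hi)⟩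
  exact hlt.not_ge (R.interpolation_le_interpolation f hg)

theorem point_injective : Function.Injective R.point := by
  have key {v w : V} (hp : R.point v = R.point w) (hne : v ≠ w) : R.height v < R.height w := by
    obtain ⟨f, i, rfl⟩ := R.exists_facet_eq v
    have hw : w ∉ Set.range (R.facet f) := by
      rintro ⟨j, rfl⟩
      rw [← R.basis_apply, ← R.basis_apply] at hp
      exact hne (congrArg _ ((R.basis f).ind.injective hp))
    rw [← R.interpolation_eq_height ⟨i, rfl⟩, hp]
    exact R.interpolation_lt_height hw
  intro v w hp
  by_contra hne
  exact lt_asymm (key hp hne) (key hp.symm (Ne.symm hne))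

/-- The maximal simplex `f`, as its set of vertices. -/
def simplex (f : F) : Finset E :=
  Finset.univ.map ⟨R.basis f, (R.basis f).ind.injective⟩

theorem coe_simplex (f : F) : (R.simplex f : Set E) = Set.range (R.basis f) := by
  simp [simplex]

theorem card_simplex (f : F) : (R.simplex f).card = Fintype.card ι :=
  Finset.card_map _

theorem point_mem_simplex_iff {f : F} {v : V} :
    R.point v ∈ R.simplex f ↔ v ∈ Set.range (R.facet f) := by
  simp [simplex, R.basis_apply, R.point_injective.eq_iff]

theorem mem_convexHull_simplex_iff {f : F} {x : E} :
    x ∈ convexHull ℝ (R.simplex f : Set E) ↔ ∀ i, 0 ≤ (R.basis f).coord i x := by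
  rw [R.coe_simplex, (R.basis f).convexHull_eq_nonneg_coord]
  rfl

theorem mem_convexHull_inter_simplex {s : Finset E} {f g : F} (hs : s ⊆ R.simplex f) {x : E}
    (hxs : x ∈ convexHull ℝ (s : Set E)) (hxg : x ∈ convexHull ℝ (R.simplex g : Set E)) :
    x ∈ convexHull ℝ (s ∩ R.simplex g : Set E) := by
  have hxf := convexHull_mono (Finset.coe_subset.2 hs) hxs
  rw [mem_convexHull_simplex_iff] at hxf hxg
  have himage {t : Set E} (ht : t ⊆ R.simplex f) : R.basis f '' (R.basis f ⁻¹' t) = t :=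
    Set.image_preimage_eq_of_subset (R.coe_simplex f ▸ ht)
  rw [← himage (Finset.coe_subset.2 hs), mem_convexHull_image_iff_coord] at hxs
  rw [← himage (Set.inter_subset_left.trans (Finset.coe_subset.2 hs)),
    mem_convexHull_image_iff_coord]
  refine ⟨hxf, fun i hi => ⟨hxs.2 i hi, ?_⟩⟩
  rw [R.basis_apply, Finset.mem_coe, point_mem_simplex_iff]
  exact R.facet_mem_range_of_coord_ne_zero hxf hxg hi

theorem convexHull_inter_subset {s t : Finset E} {f g : F} (hs : s ⊆ R.simplex f)
    (ht : t ⊆ R.simplex g) :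
    convexHull ℝ (s : Set E) ∩ convexHull ℝ (t : Set E) ⊆ convexHull ℝ (s ∩ t : Set E) := by
  classical
  rintro x ⟨hxs, hxt⟩
  have hxsg := R.mem_convexHull_inter_simplex hs hxs (convexHull_mono (Finset.coe_subset.2 ht) hxt)
  have hindep : AffineIndependent ℝ ((↑) : R.simplex g → E) := by
    have := (R.basis g).ind.range
    rwa [← R.coe_simplex] at this
  rw [← Finset.coe_inter] at hxsg
  have hx : x ∈ convexHull ℝ (↑(s ∩ R.simplex g) ∩ ↑t : Set E) := by
    rw [hindep.convexHull_inter Finset.inter_subset_right ht]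
    exact ⟨hxsg, hxt⟩
  refine convexHull_mono (Set.inter_subset_inter_left _ ?_) hx
  exact Finset.coe_subset.2 Finset.inter_subset_left

/-- A simplex with maximal interpolated height at `x` contains `x`: across a ridge separating the
two the interpolated height would increase. -/
theorem exists_mem_convexHull_simplex [Finite F] [Nonempty F] {x : E} (hx : x ∈ convexHull ℝ S) :
    ∃ f, x ∈ convexHull ℝ (R.simplex f : Set E) := by
  obtain ⟨f, hmax⟩ := Finite.exists_max fun f => R.interpolation f x
  refine ⟨f, R.mem_convexHull_simplex_iff.2 fun i => ?_⟩
  obtain ⟨g, hshared, hnew⟩ | hboundary := R.ridge f i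
  · by_contra! hneg
    refine (hmax g).not_gt ?_
    rw [R.interpolation_eq_sum g f, R.interpolation_apply f]
    refine Finset.sum_lt_sum (fun j _ => ?_)
      ⟨i, Finset.mem_univ i, mul_lt_mul_of_neg_left (R.interpolation_lt_height hnew) hneg⟩
    obtain rfl | hj := eq_or_ne j i
    · exact mul_le_mul_of_nonpos_left (R.interpolation_le_height g _) hneg.le
    · rw [R.interpolation_eq_height (hshared j hj)]
  · exact affineMap_nonneg_of_mem_convexHull hboundary hx

/-- The geometric simplicial complex of all nonempty faces of the maximal simplices. -/
def complex : Geometry.SimplicialComplex ℝ E where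
  faces := {s | s.Nonempty ∧ ∃ f, s ⊆ R.simplex f}
  isRelLowerSet_faces := fun _ ⟨hs, f, hf⟩ =>
    ⟨hs, fun _ hts ht => ⟨ht, f, hts.trans hf⟩⟩
  indep := fun ⟨_, f, hf⟩ =>
    (R.basis f).ind.range.mono (R.coe_simplex f ▸ Finset.coe_subset.2 hf)
  inter_subset_convexHull := fun ⟨_, _, hf⟩ ⟨_, _, hg⟩ => R.convexHull_inter_subset hf hg

theorem simplex_mem_complex [Nonempty ι] (f : F) : R.simplex f ∈ R.complex.faces :=
  ⟨Finset.univ_nonempty.map, f, subset_rfl⟩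

theorem finite_complex_faces [Finite F] : R.complex.faces.Finite := by
  refine (Set.finite_iUnion fun f => (R.simplex f).powerset.finite_toSet).subset ?_
  rintro s ⟨-, f, hf⟩
  exact Set.mem_iUnion.2 ⟨f, Finset.mem_powerset.2 hf⟩

theorem point_mem_vertices (v : V) : R.point v ∈ R.complex.vertices := by
  obtain ⟨f, i, rfl⟩ := R.exists_facet_eq v
  exact ⟨Finset.singleton_nonempty _, f,
    Finset.singleton_subset_iff.2 (R.point_mem_simplex_iff.2 ⟨i, rfl⟩)⟩

theorem space_complex [Finite F] [Nonempty F] [Nonempty ι] :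
    R.complex.space = convexHull ℝ S := by
  ext x
  rw [Geometry.SimplicialComplex.mem_space_iff]
  constructor
  · rintro ⟨s, ⟨-, f, hf⟩, hx⟩
    refine convexHull_min (fun y hy => ?_) (convex_convexHull ℝ S) hx
    obtain ⟨i, rfl⟩ := (R.coe_simplex f).subset (hf hy)
    exact R.basis_apply f i ▸ R.point_mem _
  · intro hx
    obtain ⟨f, hf⟩ := R.exists_mem_convexHull_simplex hx
    exact ⟨R.simplex f, R.simplex_mem_complex f, hf⟩

end RegularTriangulation

/-! ### Sperner labellings and colourings of Gallai's graph -/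

namespace SimplexTriangulation

variable {d : ℕ} (T : SimplexTriangulation d)

/-- The corners of the simplex as an affine basis of the ambient space, whose coordinates are the
barycentric coordinates of the simplex. -/
noncomputable def cornerBasis : AffineBasis (Fin (d + 1)) ℝ (EuclideanSpace ℝ (Fin d)) where
  toFun := T.corner
  ind' := T.indep
  tot' := T.indep.affineSpan_eq_top_iff_card_eq_finrank_add_one.2 (by simp)

variable {T}

theorem mem_vertices_of_mem {s : Finset (EuclideanSpace ℝ (Fin d))} (hs : s ∈ T.K.faces)
    {x : EuclideanSpace ℝ (Fin d)} (hx : x ∈ s) : x ∈ T.K.vertices :=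
  T.K.vertices_eq ▸ Set.mem_biUnion hs hx

theorem coord_nonneg_of_mem_vertices {x : EuclideanSpace ℝ (Fin d)} (hx : x ∈ T.K.vertices)
    (i : Fin (d + 1)) : 0 ≤ T.cornerBasis.coord i x := by
  have hxT : x ∈ convexHull ℝ (Set.range T.cornerBasis) :=
    T.space_eq.subset (T.K.vertices_subset_space hx)
  rw [T.cornerBasis.convexHull_eq_nonneg_coord] at hxT
  exact hxT i

theorem mem_convexHull_corner_iff {x : EuclideanSpace ℝ (Fin d)} (hx : x ∈ T.K.vertices)
    {s : Set (Fin (d + 1))} :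
    x ∈ convexHull ℝ (T.corner '' s) ↔ ∀ i, T.cornerBasis.coord i x ≠ 0 → i ∈ s := by
  have := mem_convexHull_image_iff_coord T.cornerBasis (s := s) (x := x)
  exact this.trans (and_iff_right (coord_nonneg_of_mem_vertices hx))

theorem eq_corner_of_one_le_coord {x : EuclideanSpace ℝ (Fin d)} (hx : x ∈ T.K.vertices)
    {i : Fin (d + 1)} (hi : 1 ≤ T.cornerBasis.coord i x) : x = T.corner i := by
  have hnonneg := coord_nonneg_of_mem_vertices hx
  have hzero : ∀ j ≠ i, T.cornerBasis.coord j x = 0 := by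
    have hsum := T.cornerBasis.sum_coord_apply_eq_one x
    rw [← Finset.add_sum_erase _ _ (Finset.mem_univ i)] at hsum
    have hrest : ∑ j ∈ Finset.univ.erase i, T.cornerBasis.coord j x = 0 :=
      le_antisymm (by linarith) (Finset.sum_nonneg fun j _ => hnonneg j)
    intro j hj
    exact (Finset.sum_eq_zero_iff_of_nonneg fun j _ => hnonneg j).1 hrest j
      (Finset.mem_erase.2 ⟨hj, Finset.mem_univ j⟩)
  have : x ∈ convexHull ℝ (T.corner '' {i}) :=
    (mem_convexHull_corner_iff hx).2 fun j hj => by_contra fun hji => hj (hzero j hji)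
  simpa using this

theorem corner_mem_vertices (i : Fin (d + 1)) : T.corner i ∈ T.K.vertices := by
  have hspace : T.corner i ∈ T.K.space :=
    T.space_eq ▸ subset_convexHull ℝ _ (Set.mem_range_self i)
  obtain ⟨s, hs, hi⟩ := SimplicialComplex.mem_space_iff.1 hspace
  -- The `i`-th coordinate is below one at all other vertices, hence on their convex hull.
  by_contra hn
  have hlt : convexHull ℝ (s : Set _) ⊆ T.cornerBasis.coord i ⁻¹' Set.Iio 1 := by
    refine convexHull_min (fun x hx => ?_) ((convex_Iio 1).affine_preimage _)
    by_contra hx1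
    have hxK := mem_vertices_of_mem hs hx
    exact hn (eq_corner_of_one_le_coord hxK (not_lt.1 hx1) ▸ hxK)
  exact (hlt hi).ne (T.cornerBasis.coord_apply_eq i)

theorem isSperner_iff {l : EuclideanSpace ℝ (Fin d) → Fin (d + 1)} :
    T.IsSperner l ↔ ∀ x ∈ T.K.vertices, T.cornerBasis.coord (l x) x ≠ 0 := by
  constructor
  · intro hl x hx h0
    obtain ⟨i, hi, rfl⟩ := hl.2 x hx {i | T.cornerBasis.coord i x ≠ 0}
      ((mem_convexHull_corner_iff hx).2 fun _ h => h)
    exact hi h0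
  · intro h
    refine ⟨fun i => ?_, fun x hx s hxs =>
      ⟨l x, (mem_convexHull_corner_iff hx).1 hxs _ (h x hx), rfl⟩⟩
    by_contra hne
    exact h _ (corner_mem_vertices i) (T.cornerBasis.coord_apply_ne hne)

/-- The vertices of type (V1) of Gallai's graph. -/
def pointVertex (u : T.K.vertices) : T.GallaiVertex :=
  Sum.inl u

/-- The vertices `v_ρ` of type (V2) of Gallai's graph. -/
def facetVertex (ρ : {σ // T.IsFacet σ}) : T.GallaiVertex :=
  Sum.inr (Sum.inl ρ)

variable (T) in
/-- The vertices `w_j` of type (V3) of Gallai's graph. -/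
def sideVertex (j : Fin (d + 1)) : T.GallaiVertex :=
  Sum.inr (Sum.inr j)

theorem pointVertex_ne_facetVertex (u : T.K.vertices) (ρ : {σ // T.IsFacet σ}) :
    pointVertex u ≠ facetVertex ρ :=
  Sum.inl_ne_inr

theorem sideVertex_ne_facetVertex (j : Fin (d + 1)) (ρ : {σ // T.IsFacet σ}) :
    T.sideVertex j ≠ facetVertex ρ := fun h =>
  Sum.inr_ne_inl (Sum.inr_injective h)

theorem facetVertex_injective : Function.Injective (facetVertex (T := T)) :=
  Sum.inr_injective.comp Sum.inl_injective

theorem gallaiGraph_adj_point_facet {u : T.K.vertices} {ρ : {σ // T.IsFacet σ}}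
    (hu : (u : EuclideanSpace ℝ (Fin d)) ∈ ρ.1) :
    T.GallaiGraph.Adj (pointVertex u) (facetVertex ρ) :=
  (SimpleGraph.fromRel_adj _ _ _).2 ⟨Sum.inl_ne_inr, Or.inl hu⟩

theorem gallaiGraph_adj_point_side {u : T.K.vertices} {j : Fin (d + 1)}
    (hj : T.cornerBasis.coord j u = 0) : T.GallaiGraph.Adj (pointVertex u) (T.sideVertex j) := by
  refine (SimpleGraph.fromRel_adj _ _ _).2 ⟨Sum.inl_ne_inr, Or.inl ?_⟩
  exact (mem_convexHull_corner_iff u.2).2 fun i hi hij => hi (hij ▸ hj)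

theorem gallaiGraph_adj_side_side {i j : Fin (d + 1)} (hij : i ≠ j) :
    T.GallaiGraph.Adj (T.sideVertex i) (T.sideVertex j) := by
  refine (SimpleGraph.fromRel_adj _ _ _).2 ⟨fun h => hij ?_, Or.inl trivial⟩
  exact Sum.inr_injective (Sum.inr_injective h)

variable (T) in
theorem gallaiGraph_colorable : T.GallaiGraph.Colorable (d + 2) := by
  let color : T.GallaiVertex → Fin (d + 2)
    | Sum.inl _ => Fin.last (d + 1)
    | Sum.inr (Sum.inl _) => 0
    | Sum.inr (Sum.inr j) => j.castSucc
  have hrel : ∀ {a b}, a ≠ b → T.gallaiRel a b → color a ≠ color b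
    | Sum.inl _, Sum.inr (Sum.inl _), _, _ => Fin.last_pos.ne'
    | Sum.inl _, Sum.inr (Sum.inr j), _, _ => j.castSucc_lt_last.ne'
    | Sum.inr (Sum.inr _), Sum.inr (Sum.inr _), hne, _ => fun h =>
      hne (congrArg T.sideVertex (Fin.castSucc_injective _ h))
  refine ⟨SimpleGraph.Coloring.mk color fun {a b} hab => ?_⟩
  obtain ⟨hne, h | h⟩ := (SimpleGraph.fromRel_adj _ _ _).1 hab
  · exact hrel hne h
  · exact (hrel hne.symm h).symm

/-- The side vertices use every colour, so the colouring pulls back to a labelling; colours of the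
facet vertices other than `v_σ` then show that no facet but `σ` is rainbow. -/
theorem exists_isSperner_forall_not_rainbow {σ : {σ // T.IsFacet σ}}
    (c : (T.GallaiGraph.deleteIncidenceSet (facetVertex σ)).Coloring (Fin (d + 1))) :
    ∃ l, T.IsSperner l ∧ ∀ τ, T.IsFacet τ → τ ≠ σ → ¬ Rainbow l τ := by
  classical
  have hne {a b} (hab : T.GallaiGraph.Adj a b) (ha : a ≠ facetVertex σ) (hb : b ≠ facetVertex σ) :
      c a ≠ c b := c.valid (T.GallaiGraph.deleteIncidenceSet_adj.2 ⟨hab, ha, hb⟩)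
  have hinj : Function.Injective fun j => c (T.sideVertex j) := fun i j hij =>
    by_contra fun h => hne (gallaiGraph_adj_side_side h) (sideVertex_ne_facetVertex i σ)
      (sideVertex_ne_facetVertex j σ) hij
  let e := Equiv.ofBijective _ (Finite.injective_iff_bijective.1 hinj)
  let l : EuclideanSpace ℝ (Fin d) → Fin (d + 1) := fun x =>
    if hx : x ∈ T.K.vertices then e.symm (c (pointVertex ⟨x, hx⟩)) else 0
  have hl {x} (hx : x ∈ T.K.vertices) : e (l x) = c (pointVertex ⟨x, hx⟩) := by
    simp only [l, dif_pos hx, Equiv.apply_symm_apply]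
  refine ⟨l, isSperner_iff.2 fun x hx h0 => ?_, fun τ hτ hτσ hrainbow => ?_⟩
  · exact hne (gallaiGraph_adj_point_side (u := ⟨x, hx⟩) h0) (pointVertex_ne_facetVertex _ σ)
      (sideVertex_ne_facetVertex _ σ) (hl hx).symm
  · have himage : τ.image l = Finset.univ := Finset.eq_univ_of_card _ <| by
      rw [Finset.card_image_of_injOn hrainbow, hτ.2, Fintype.card_fin]
    obtain ⟨x, hxτ, hx⟩ := Finset.mem_image.1
      (himage ▸ Finset.mem_univ (e.symm (c (facetVertex ⟨τ, hτ⟩))))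
    have hxK := mem_vertices_of_mem hτ.1 hxτ
    refine hne (gallaiGraph_adj_point_facet (u := ⟨x, hxK⟩) (ρ := ⟨τ, hτ⟩) hxτ)
      (pointVertex_ne_facetVertex _ σ)
      (fun h => hτσ (congrArg Subtype.val (facetVertex_injective h))) ?_
    rw [← hl hxK, hx, Equiv.apply_symm_apply]

theorem not_colorable_deleteIncidenceSet {σ : {σ // T.IsFacet σ}}
    (hrainbow : ∀ l, T.IsSperner l → ∃ τ, T.IsFacet τ ∧ τ ≠ σ ∧ Rainbow l τ) :
    ¬ (T.GallaiGraph.deleteIncidenceSet (facetVertex σ)).Colorable (d + 1) := by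
  rintro ⟨c⟩
  obtain ⟨l, hl, hnot⟩ := exists_isSperner_forall_not_rainbow c
  obtain ⟨τ, hτ, hτσ, hτl⟩ := hrainbow l hl
  exact hnot τ hτ hτσ hτl

theorem chromaticNumber_gallaiGraph {σ : {σ // T.IsFacet σ}}
    (hrainbow : ∀ l, T.IsSperner l → ∃ τ, T.IsFacet τ ∧ τ ≠ σ ∧ Rainbow l τ) :
    T.GallaiGraph.chromaticNumber = (d + 2 : ℕ) := by
  refine le_antisymm T.gallaiGraph_colorable.chromaticNumber_le ?_
  rw [Nat.cast_add_one d.succ, ENat.add_one_le_iff (ENat.natCast_ne_top _)]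
  by_contra! hle
  exact not_colorable_deleteIncidenceSet hrainbow <|
    (SimpleGraph.chromaticNumber_le_iff_colorable.1 hle).mono_left
      (T.GallaiGraph.deleteIncidenceSet_le _)

theorem exists_edge_not_colorable_deleteEdges {σ : {σ // T.IsFacet σ}}
    (hrainbow : ∀ l, T.IsSperner l → ∃ τ, T.IsFacet τ ∧ τ ≠ σ ∧ Rainbow l τ) :
    ∃ e ∈ T.GallaiGraph.edgeSet, ¬ (T.GallaiGraph.deleteEdges {e}).Colorable (d + 1) := by
  obtain ⟨x, hx⟩ := T.K.nonempty_of_mem_faces σ.2.1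
  have hadj := gallaiGraph_adj_point_facet (u := ⟨x, mem_vertices_of_mem σ.2.1 hx⟩) hx
  refine ⟨_, T.GallaiGraph.mem_edgeSet.2 hadj, fun h =>
    not_colorable_deleteIncidenceSet hrainbow (h.mono_left ?_)⟩
  exact SimpleGraph.deleteEdges_anti (Set.singleton_subset_iff.2 ⟨hadj, Sym2.mem_mk_right _ _⟩)

end SimplexTriangulation

namespace RegularTriangulation

section SimplexTriangulation

variable {V F ι : Type*} [Fintype ι] {d : ℕ} {b : AffineBasis ι ℝ (EuclideanSpace ℝ (Fin d))}
  (R : RegularTriangulation V F ι (Set.range b)) (e : ι ≃ Fin (d + 1)) [Finite F] [Nonempty F]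

/-- A regular triangulation of the simplex spanned by `b` as a `SimplexTriangulation`, with the
corners numbered by `e`. -/
noncomputable def toSimplexTriangulation : SimplexTriangulation d where
  K := R.complex
  corner := b ∘ e.symm
  indep := b.ind.comp_embedding e.symm.toEmbedding
  finite := R.finite_complex_faces
  space_eq := by
    have : Nonempty ι := ⟨e.symm 0⟩
    rw [e.symm.surjective.range_comp, R.space_complex]

theorem coord_cornerBasis_toSimplexTriangulation (j : Fin (d + 1)) :
    (R.toSimplexTriangulation e).cornerBasis.coord j = b.coord (e.symm j) :=
  b.coord_reindex e j

theorem isFacet_simplex (f : F) : (R.toSimplexTriangulation e).IsFacet (R.simplex f) := by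
  have : Nonempty ι := ⟨e.symm 0⟩
  exact ⟨R.simplex_mem_complex f, by rw [R.card_simplex, Fintype.card_congr e, Fintype.card_fin]⟩

end SimplexTriangulation

section ForcesRainbow

variable {V F ι E : Type*} [Fintype ι] [AddCommGroup E] [Module ℝ E] {b : AffineBasis ι ℝ E}

/-- Every Sperner labelling of the vertices, by elements of the index type of the corners, has a
rainbow maximal simplex with a vertex outside the maximal simplex `f₀`. The Sperner condition is
expressed by the barycentric coordinate at the label being nonzero. -/
def ForcesRainbowAwayFrom (R : RegularTriangulation V F ι (Set.range b)) (f₀ : F) : Prop :=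
  ∀ lab : V → ι, (∀ v, b.coord (lab v) (R.point v) ≠ 0) →
    ∃ f, (∃ i, R.facet f i ∉ Set.range (R.facet f₀)) ∧ Function.Injective (lab ∘ R.facet f)

theorem ForcesRainbowAwayFrom.exists_rainbow {d : ℕ}
    {b : AffineBasis ι ℝ (EuclideanSpace ℝ (Fin d))} [Finite F] [Nonempty F]
    {R : RegularTriangulation V F ι (Set.range b)} {f₀ : F} (h : R.ForcesRainbowAwayFrom f₀)
    (e : ι ≃ Fin (d + 1)) {l : EuclideanSpace ℝ (Fin d) → Fin (d + 1)}
    (hl : (R.toSimplexTriangulation e).IsSperner l) :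
    ∃ τ, (R.toSimplexTriangulation e).IsFacet τ ∧ τ ≠ R.simplex f₀ ∧ Rainbow l τ := by
  obtain ⟨f, ⟨i, hi⟩, hinj⟩ := h (fun v => e.symm (l (R.point v))) fun v => by
    rw [← R.coord_cornerBasis_toSimplexTriangulation e]
    exact SimplexTriangulation.isSperner_iff.1 hl _ (R.point_mem_vertices v)
  refine ⟨R.simplex f, R.isFacet_simplex e f, fun hf => hi ?_, ?_⟩
  · rw [← R.point_mem_simplex_iff, ← hf, R.point_mem_simplex_iff]
    exact Set.mem_range_self i
  · have hrainbow : Function.Injective (l ∘ R.basis f) := fun i j hij =>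
      hinj (by simpa [R.basis_apply] using hij)
    rw [Rainbow, R.coe_simplex]
    exact hrainbow.injOn_range

end ForcesRainbow

section Join

theorem inl_mem_range_map_id {α β γ : Type*} {p : α → β} {x : β} :
    Sum.inl x ∈ Set.range (Sum.map p (id : γ → γ)) ↔ x ∈ Set.range p := by
  simp

variable {V F ι κ E₀ E : Type*} [Fintype ι] [Fintype κ] [AddCommGroup E₀] [Module ℝ E₀]
  [AddCommGroup E] [Module ℝ E] (b₀ : AffineBasis ι ℝ E₀) (b : AffineBasis (ι ⊕ κ) ℝ E)

/-- The affine identification of the space of `b₀` with the face of `b` spanned by the corners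
`b (Sum.inl i)`. -/
noncomputable def liftToFace (x : E₀) : E :=
  Finset.univ.affineCombination ℝ b (Sum.elim (b₀.coords x) 0)

theorem coords_liftToFace (x : E₀) :
    b.coords (liftToFace b₀ b x) = Sum.elim (b₀.coords x) 0 := by
  ext i
  refine coord_affineCombination b ?_ i
  simp [Fintype.sum_sum_type]

theorem liftToFace_basis (i : ι) : liftToFace b₀ b (b₀ i) = b (Sum.inl i) := by
  classical
  refine b.ext_elem fun j => ?_
  rw [← b.coords_apply, coords_liftToFace]
  cases j <;> simp [AffineBasis.coord_apply]

theorem liftToFace_mem_convexHull {x : E₀} (hx : x ∈ convexHull ℝ (Set.range b₀)) :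
    liftToFace b₀ b x ∈ convexHull ℝ (Set.range b) := by
  rw [AffineBasis.convexHull_eq_nonneg_coord] at hx ⊢
  intro i
  rw [← b.coords_apply, coords_liftToFace]
  cases i with
  | inl i => exact hx i
  | inr k => exact le_rfl

theorem toMatrix_join [DecidableEq κ] (p : ι → E₀) :
    b.toMatrix (Sum.elim (liftToFace b₀ b ∘ p) (b ∘ Sum.inr)) =
      Matrix.fromBlocks (b₀.toMatrix p) 0 0 1 := by
  classical
  ext (i | k) j
  · rw [AffineBasis.toMatrix_apply, ← b.coords_apply]
    simp only [Sum.elim_inl, Function.comp_apply, coords_liftToFace]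
    cases j <;> simp
  · cases j <;>
      simp [AffineBasis.toMatrix_apply, AffineBasis.coord_apply, Matrix.one_apply, eq_comm]

/-- The affine basis obtained from an affine basis of the face `Sum.inl` of `b` by adding the
remaining corners of `b`. -/
noncomputable def joinBasis (b' : AffineBasis ι ℝ E₀) : AffineBasis (ι ⊕ κ) ℝ E := by
  classical
  have hunit : IsUnit (b.toMatrix (Sum.elim (liftToFace b₀ b ∘ b') (b ∘ Sum.inr))) := by
    rw [toMatrix_join, Matrix.isUnit_fromBlocks_zero₂₁]
    exact ⟨b₀.isUnit_toMatrix b', isUnit_one⟩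
  exact ⟨_, ((b.isUnit_toMatrix_iff _).1 hunit).1, ((b.isUnit_toMatrix_iff _).1 hunit).2⟩

theorem coe_joinBasis (b' : AffineBasis ι ℝ E₀) :
    joinBasis b₀ b b' = Sum.elim (liftToFace b₀ b ∘ b') (b ∘ Sum.inr) :=
  rfl

theorem coords_joinBasis_liftToFace (b' : AffineBasis ι ℝ E₀) (x : E₀) :
    (joinBasis b₀ b b').coords (liftToFace b₀ b x) = Sum.elim (b'.coords x) 0 := by
  classical
  apply Matrix.vecMul_injective_of_isUnit (b.isUnit_toMatrix (joinBasis b₀ b b'))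
  beta_reduce
  rw [b.toMatrix_vecMul_coords, coords_liftToFace, coe_joinBasis, toMatrix_join]
  simp [Matrix.vecMul_fromBlocks]

theorem coord_joinBasis_inr_nonneg (b' : AffineBasis ι ℝ E₀) (i : ι ⊕ κ) (k : κ) :
    0 ≤ (joinBasis b₀ b b').coord i (b (Sum.inr k)) := by
  classical
  change 0 ≤ (joinBasis b₀ b b').coord i (joinBasis b₀ b b' (Sum.inr k))
  rw [AffineBasis.coord_apply]
  split_ifs <;> norm_num

theorem coord_joinBasis_nonneg_iff (b' : AffineBasis ι ℝ E₀) (i : ι ⊕ κ) :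
    (∀ x ∈ Set.range b, 0 ≤ (joinBasis b₀ b b').coord i x) ↔
      ∀ x ∈ Set.range b₀, 0 ≤ (Sum.elim (b'.coords x) 0 : ι ⊕ κ → ℝ) i := by
  simp only [Set.forall_mem_range, Sum.forall, ← liftToFace_basis b₀, ← AffineBasis.coords_apply,
    coords_joinBasis_liftToFace]
  exact and_iff_left fun k => coord_joinBasis_inr_nonneg b₀ b b' i k

/-- The join of a triangulation of the simplex of `b₀`, placed on a face of the simplex of `b`, with
the opposite face: every maximal simplex is extended by all remaining corners. -/
noncomputable def join [Nonempty F] (R : RegularTriangulation V F ι (Set.range b₀)) :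
    RegularTriangulation (V ⊕ κ) F (ι ⊕ κ) (Set.range b) where
  point := Sum.elim (liftToFace b₀ b ∘ R.point) (b ∘ Sum.inr)
  height := Sum.elim R.height 0
  facet f := Sum.map (R.facet f) id
  basis f := joinBasis b₀ b (R.basis f)
  basis_apply f := by
    rintro (i | k)
    · simp [coe_joinBasis, R.basis_apply]
    · rfl
  exists_facet_eq := by
    rintro (v | k)
    · obtain ⟨f, i, rfl⟩ := R.exists_facet_eq v
      exact ⟨f, Sum.inl i, rfl⟩
    · exact ⟨Classical.arbitrary F, Sum.inr k, rfl⟩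
  point_mem := by
    rintro (v | k)
    · exact liftToFace_mem_convexHull b₀ b (R.point_mem v)
    · exact subset_convexHull ℝ _ (Set.mem_range_self (Sum.inr k))
  sum_height_lt := by
    rintro f (v | k) hv
    · rw [inl_mem_range_map_id] at hv
      simpa [Fintype.sum_sum_type, ← AffineBasis.coords_apply, coords_joinBasis_liftToFace]
        using R.sum_height_lt f v hv
    · exact absurd ⟨Sum.inr k, rfl⟩ hv
  ridge := by
    rintro f (i | k)
    · refine (R.ridge f i).imp ?_ (coord_joinBasis_nonneg_iff b₀ b (R.basis f) (Sum.inl i)).2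
      rintro ⟨g, hshared, hnew⟩
      refine ⟨g, ?_, inl_mem_range_map_id.not.2 hnew⟩
      rintro (j | k) hj
      · exact inl_mem_range_map_id.2 (hshared j fun h => hj (congrArg Sum.inl h))
      · exact ⟨Sum.inr k, rfl⟩
    · exact Or.inr ((coord_joinBasis_nonneg_iff b₀ b (R.basis f) (Sum.inr k)).2 fun _ _ => le_rfl)

theorem ForcesRainbowAwayFrom.join [Nonempty F] {b₀ : AffineBasis ι ℝ E₀}
    {R : RegularTriangulation V F ι (Set.range b₀)} {f₀ : F} (h : R.ForcesRainbowAwayFrom f₀)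
    (b : AffineBasis (ι ⊕ κ) ℝ E) : (R.join b₀ b).ForcesRainbowAwayFrom f₀ := by
  intro lab hlab
  have hinl (v : V) : ∃ i, lab (Sum.inl v) = Sum.inl i ∧ b₀.coord i (R.point v) ≠ 0 := by
    have hv : b.coords (liftToFace b₀ b (R.point v)) (lab (Sum.inl v)) ≠ 0 := hlab (Sum.inl v)
    rw [coords_liftToFace] at hv
    cases hlv : lab (Sum.inl v) with
    | inl i => exact ⟨i, rfl, by simpa [hlv] using hv⟩
    | inr k => simp [hlv] at hv
  have hinr (k : κ) : lab (Sum.inr k) = Sum.inr k := by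
    by_contra hne
    exact hlab (Sum.inr k) (b.coord_apply_ne hne)
  choose lab₀ hlab₀ hcoord using hinl
  obtain ⟨f, ⟨i, hi⟩, hinj⟩ := h lab₀ hcoord
  refine ⟨f, ⟨Sum.inl i, inl_mem_range_map_id.not.2 hi⟩, ?_⟩
  have hmap : lab ∘ (R.join b₀ b).facet f = Sum.map (lab₀ ∘ R.facet f) id := by
    ext (i | k)
    · exact hlab₀ _
    · exact hinr k
  rw [hmap]
  exact Sum.map_injective.2 ⟨hinj, Function.injective_id⟩

end Join

end RegularTriangulation

/-! ### Integral certificates -/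

section LatticeVolume

variable {V ι : Type*} [Fintype ι] [DecidableEq ι]

/-- The determinant of the homogeneous coordinates of the vertices `p i`, that is, their signed
volume in units of the volume of the simplex of the coordinate corners. -/
def latticeVolume (coord : Matrix V ι ℤ) (p : ι → V) : ℤ :=
  (coord.submatrix p id).det

end LatticeVolume

/-- Integral data for a regular triangulation of a simplex: the vertex `v` has the barycentric
coordinates `coord v i / scale`, and the conditions of `RegularTriangulation` are expressed, by
Cramer's rule, through the volumes of the simplices in which one vertex of a maximal simplex has
been replaced. -/
structure IntegralTriangulation (V F ι : Type*) [Fintype ι] [DecidableEq ι] where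
  scale : ℤ
  coord : Matrix V ι ℤ
  corner : ι → V
  height : V → ℤ
  facet : F → ι → V
  scale_pos : 0 < scale
  coord_corner : ∀ k, coord (corner k) = Pi.single k scale
  coord_nonneg : ∀ v i, 0 ≤ coord v i
  sum_coord : ∀ v, ∑ i, coord v i = scale
  exists_facet_eq : ∀ v, ∃ f i, facet f i = v
  volume_pos : ∀ f, 0 < latticeVolume coord (facet f)
  sum_volume_mul_height_lt : ∀ f v, v ∉ Set.range (facet f) →
    ∑ i, latticeVolume coord (Function.update (facet f) i v) * height (facet f i) <
      latticeVolume coord (facet f) * height v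
  ridge : ∀ f i,
    (∃ g, (∀ j ≠ i, facet f j ∈ Set.range (facet g)) ∧ facet f i ∉ Set.range (facet g)) ∨
      ∀ k, 0 ≤ latticeVolume coord (Function.update (facet f) i (corner k))

namespace IntegralTriangulation

variable {V F ι E : Type*} [Fintype ι] [DecidableEq ι] [AddCommGroup E] [Module ℝ E]
  (C : IntegralTriangulation V F ι) (b : AffineBasis ι ℝ E)

/-- The position of the vertex `v` in the simplex of `b`. -/
noncomputable def point (v : V) : E :=
  Finset.univ.affineCombination ℝ b fun i => (C.coord v i : ℝ) / C.scale

theorem scale_ne_zero : (C.scale : ℝ) ≠ 0 :=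
  Int.cast_ne_zero.2 C.scale_pos.ne'

theorem coord_point (v : V) (i : ι) : b.coord i (C.point b v) = C.coord v i / C.scale := by
  refine coord_affineCombination b ?_ i
  rw [← Finset.sum_div, ← Int.cast_sum, C.sum_coord, div_self C.scale_ne_zero]

theorem coord_point_ne_zero_iff {v : V} {i : ι} :
    b.coord i (C.point b v) ≠ 0 ↔ C.coord v i ≠ 0 := by
  rw [coord_point, div_ne_zero_iff, and_iff_left C.scale_ne_zero, Int.cast_ne_zero]

theorem point_corner (k : ι) : C.point b (C.corner k) = b k := by
  refine b.ext_elem fun i => ?_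
  rw [coord_point, C.coord_corner, AffineBasis.coord_apply]
  obtain rfl | hik := eq_or_ne i k
  · simp [C.scale_ne_zero]
  · simp [hik]

theorem point_mem_convexHull (v : V) : C.point b v ∈ convexHull ℝ (Set.range b) := by
  rw [b.convexHull_eq_nonneg_coord]
  intro i
  rw [coord_point]
  exact div_nonneg (Int.cast_nonneg (C.coord_nonneg v i)) (Int.cast_nonneg C.scale_pos.le)

theorem det_toMatrix_point (p : ι → V) :
    (b.toMatrix (C.point b ∘ p)).det =
      (C.scale : ℝ)⁻¹ ^ Fintype.card ι * latticeVolume C.coord p := by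
  have hmatrix : b.toMatrix (C.point b ∘ p) =
      (C.scale : ℝ)⁻¹ • (C.coord.submatrix p id).map (Int.cast : ℤ → ℝ) := by
    ext i j
    simp [AffineBasis.toMatrix_apply, coord_point, div_eq_inv_mul]
  rw [hmatrix, Matrix.det_smul, latticeVolume, Int.cast_det]

theorem isUnit_toMatrix_facet (f : F) : IsUnit (b.toMatrix (C.point b ∘ C.facet f)) := by
  rw [Matrix.isUnit_iff_isUnit_det, isUnit_iff_ne_zero, det_toMatrix_point]
  exact mul_ne_zero (pow_ne_zero _ (inv_ne_zero C.scale_ne_zero))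
    (Int.cast_ne_zero.2 (C.volume_pos f).ne')

/-- The maximal simplex `f`, as an affine basis. -/
noncomputable def facetBasis (f : F) : AffineBasis ι ℝ E :=
  ⟨C.point b ∘ C.facet f, ((b.isUnit_toMatrix_iff _).1 (C.isUnit_toMatrix_facet b f)).1,
    ((b.isUnit_toMatrix_iff _).1 (C.isUnit_toMatrix_facet b f)).2⟩

theorem coe_facetBasis (f : F) : C.facetBasis b f = C.point b ∘ C.facet f :=
  rfl

theorem coord_facetBasis (f : F) (i : ι) (v : V) :
    (C.facetBasis b f).coord i (C.point b v) =
      latticeVolume C.coord (Function.update (C.facet f) i v) /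
        latticeVolume C.coord (C.facet f) := by
  have hupdate : (b.toMatrix (C.facetBasis b f)).updateRow i (b.coords (C.point b v)) =
      b.toMatrix (C.point b ∘ Function.update (C.facet f) i v) := by
    rw [Function.comp_update]
    exact (Function.comp_update b.coords (C.facetBasis b f) i (C.point b v)).symm
  have hcramer := congrFun (b.det_smul_coords_eq_cramer_coords (C.facetBasis b f) (C.point b v)) i
  rw [Matrix.cramer_transpose_apply, hupdate, coe_facetBasis] at hcramer
  simp only [det_toMatrix_point, Pi.smul_apply, smul_eq_mul, AffineBasis.coords_apply, mul_assoc]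
    at hcramer
  refine eq_div_of_mul_eq (Int.cast_ne_zero.2 (C.volume_pos f).ne') ((mul_comm _ _).trans ?_)
  exact mul_left_cancel₀ (pow_ne_zero _ (inv_ne_zero C.scale_ne_zero)) hcramer

/-- The regular triangulation of the simplex of `b` with the given integral data. -/
noncomputable def toRegularTriangulation : RegularTriangulation V F ι (Set.range b) where
  point := C.point b
  height v := C.height v
  facet := C.facet
  basis := C.facetBasis b
  basis_apply _ _ := rfl
  exists_facet_eq := C.exists_facet_eq
  point_mem := C.point_mem_convexHull b
  sum_height_lt f v hv := by
    simp only [coord_facetBasis, div_mul_eq_mul_div, ← Finset.sum_div]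
    rw [div_lt_iff₀' (Int.cast_pos.2 (C.volume_pos f))]
    exact_mod_cast C.sum_volume_mul_height_lt f v hv
  ridge f i := by
    refine (C.ridge f i).imp_right fun h => Set.forall_mem_range.2 fun k => ?_
    rw [← C.point_corner b k, coord_facetBasis]
    exact div_nonneg (Int.cast_nonneg (h k)) (Int.cast_nonneg (C.volume_pos f).le)

end IntegralTriangulation

/-! ### A triangulation of the tetrahedron -/

section RainbowSearch

variable {V F ι : Type*} [DecidableEq V] [DecidableEq ι]

/-- Backtracking over the labellings of the vertices in `order` by allowed labels that extend
`partialLab`: a branch succeeds once one of `facets` containing the vertex labelled last carries all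
labels. -/
def rainbowSearch (labels : List ι) (allowed : V → ι → Bool) (facet : F → ι → V)
    (facets : List F) : (order : List V) → (partialLab : V → Option ι) → Bool
  | [], _ => false
  | v :: order, partialLab =>
    labels.all fun k => !allowed v k ||
      (facets.any fun f => labels.any (fun i => facet f i = v) &&
        labels.all fun j => labels.any fun i =>
          Function.update partialLab v (some k) (facet f i) = some j) ||
      rainbowSearch labels allowed facet facets order (Function.update partialLab v (some k))

theorem exists_surjective_of_rainbowSearch {labels : List ι} (hlabels : ∀ k, k ∈ labels)
    {allowed : V → ι → Bool} {facet : F → ι → V} {facets : List F} {lab : V → ι}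
    (hlab : ∀ v, allowed v (lab v)) {order : List V} {partialLab : V → Option ι}
    (hpartial : ∀ v k, partialLab v = some k → lab v = k)
    (hsearch : rainbowSearch labels allowed facet facets order partialLab) :
    ∃ f ∈ facets, Function.Surjective (lab ∘ facet f) := by
  induction order generalizing partialLab with
  | nil => cases hsearch
  | cons v order ih =>
    have hextend : ∀ w k, Function.update partialLab v (some (lab v)) w = some k → lab w = k := by
      intro w k
      obtain rfl | hw := eq_or_ne w v
      · simp
      · simpa [hw] using hpartial w k
    have hbranch := List.all_eq_true.1 hsearch (lab v) (hlabels _)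
    rw [Bool.or_eq_true, Bool.or_eq_true, hlab v] at hbranch
    obtain (hallowed | hfacet) | hrest := hbranch
    · cases hallowed
    · obtain ⟨f, hf, hrainbow⟩ := List.any_eq_true.1 hfacet
      refine ⟨f, hf, fun j => ?_⟩
      obtain ⟨i, -, hi⟩ :=
        List.any_eq_true.1 (List.all_eq_true.1 (Bool.and_eq_true_iff.1 hrainbow).2 j (hlabels j))
      exact ⟨i, hextend _ _ (of_decide_eq_true hi)⟩
    · exact ih hextend hrest

theorem IntegralTriangulation.forcesRainbowAwayFrom [Fintype ι] {E : Type*} [AddCommGroup E]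
    [Module ℝ E] (C : IntegralTriangulation V F ι) {f₀ : F} {labels : List ι}
    (hlabels : ∀ k, k ∈ labels) {facets : List F}
    (hfacets : ∀ f ∈ facets, ∃ i, C.facet f i ∉ Set.range (C.facet f₀)) {order : List V}
    (hsearch : rainbowSearch labels (C.coord · · ≠ 0) C.facet facets order fun _ => none)
    (b : AffineBasis ι ℝ E) : (C.toRegularTriangulation b).ForcesRainbowAwayFrom f₀ := by
  intro lab hlab
  obtain ⟨f, hf, hsurj⟩ := exists_surjective_of_rainbowSearch hlabels
    (fun v => decide_eq_true ((C.coord_point_ne_zero_iff b).1 (hlab v))) (by simp) hsearch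
  exact ⟨f, hfacets f hf, Finite.injective_iff_surjective.2 hsurj⟩

end RainbowSearch

theorem latticeVolume_fin_four {V : Type*} (coord : Matrix V (Fin 4) ℤ) (p : Fin 4 → V) :
    latticeVolume coord p =
      let A i := coord (p i)
      A 0 0 * (A 1 1 * (A 2 2 * A 3 3 - A 2 3 * A 3 2) -
          A 1 2 * (A 2 1 * A 3 3 - A 2 3 * A 3 1) + A 1 3 * (A 2 1 * A 3 2 - A 2 2 * A 3 1)) -
        A 0 1 * (A 1 0 * (A 2 2 * A 3 3 - A 2 3 * A 3 2) -
          A 1 2 * (A 2 0 * A 3 3 - A 2 3 * A 3 0) + A 1 3 * (A 2 0 * A 3 2 - A 2 2 * A 3 0)) +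
        A 0 2 * (A 1 0 * (A 2 1 * A 3 3 - A 2 3 * A 3 1) -
          A 1 1 * (A 2 0 * A 3 3 - A 2 3 * A 3 0) + A 1 3 * (A 2 0 * A 3 1 - A 2 1 * A 3 0)) -
        A 0 3 * (A 1 0 * (A 2 1 * A 3 2 - A 2 2 * A 3 1) -
          A 1 1 * (A 2 0 * A 3 2 - A 2 2 * A 3 0) + A 1 2 * (A 2 0 * A 3 1 - A 2 1 * A 3 0)) := by
  simp [latticeVolume, Matrix.det_succ_row_zero, Fin.sum_univ_succ, Fin.succAbove]
  ring

/-- Barycentric coordinates, multiplied by 60, of the vertices of the triangulation of the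
tetrahedron. The first four vertices are the corners. -/
def tetrahedronCoord : Matrix (Fin 12) (Fin 4) ℤ :=
  !![60, 0, 0, 0; 0, 60, 0, 0; 0, 0, 60, 0; 0, 0, 0, 60; 0, 0, 44, 16; 53, 0, 7, 0;
    3, 3, 7, 47; 21, 11, 0, 28; 0, 13, 47, 0; 9, 40, 5, 6; 28, 23, 0, 9; 4, 27, 27, 2]

/-- Heights that make the triangulation of the tetrahedron regular. -/
def tetrahedronHeight : Fin 12 → ℤ :=
  ![3600, 3600, 3600, 3600, 3254, 3477, 2472, 892, 3259, 1705, 1333, 2536]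

/-- Vertices of the tetrahedra, each listed in positive orientation. The tetrahedron `0` is the one
that no Sperner labelling needs in order to have a rainbow tetrahedron. -/
def tetrahedronFacet : Fin 36 → Fin 4 → Fin 12 :=
  ![![7, 8, 9, 11], ![0, 1, 5, 9], ![0, 1, 9, 10], ![0, 3, 6, 5], ![0, 3, 7, 6], ![0, 5, 6, 7],
    ![0, 5, 7, 10], ![0, 5, 10, 9], ![1, 3, 4, 6], ![1, 3, 6, 9], ![1, 3, 9, 7], ![1, 4, 8, 6],
    ![1, 5, 11, 8], ![1, 5, 9, 11], ![1, 6, 8, 11], ![1, 6, 11, 9], ![1, 7, 9, 10], ![2, 4, 5, 7],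
    ![2, 4, 7, 8], ![2, 5, 10, 7], ![2, 5, 8, 10], ![2, 7, 11, 8], ![2, 7, 10, 9], ![2, 7, 9, 11],
    ![2, 8, 11, 10], ![2, 9, 10, 11], ![3, 4, 6, 5], ![3, 6, 9, 7], ![4, 5, 7, 6], ![4, 6, 7, 9],
    ![4, 6, 11, 8], ![4, 6, 9, 11], ![4, 7, 8, 9], ![4, 8, 11, 9], ![5, 8, 10, 11], ![5, 9, 11, 10]]

set_option maxRecDepth 100000 in
/-- The triangulation of the tetrahedron with 12 vertices and 36 tetrahedra given by
`tetrahedronCoord` and `tetrahedronFacet`. -/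
def tetrahedronTriangulation : IntegralTriangulation (Fin 12) (Fin 36) (Fin 4) where
  scale := 60
  coord := tetrahedronCoord
  corner := ![0, 1, 2, 3]
  height := tetrahedronHeight
  facet := tetrahedronFacet
  scale_pos := by decide
  coord_corner := by decide +kernel
  coord_nonneg v := by fin_cases v <;> decide
  sum_coord := by decide +kernel
  exists_facet_eq := by decide +kernel
  volume_pos := by
    simp only [latticeVolume_fin_four]
    decide +kernel
  sum_volume_mul_height_lt := by
    simp only [latticeVolume_fin_four]
    decide +kernel
  ridge := by
    simp only [latticeVolume_fin_four]
    decide +kernel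

set_option maxRecDepth 100000 in
theorem forcesRainbowAwayFrom_tetrahedronTriangulation {E : Type*} [AddCommGroup E] [Module ℝ E]
    (b : AffineBasis (Fin 4) ℝ E) :
    (tetrahedronTriangulation.toRegularTriangulation b).ForcesRainbowAwayFrom 0 :=
  tetrahedronTriangulation.forcesRainbowAwayFrom (facets := (List.finRange 36).tail)
    (order := List.finRange 12) List.mem_finRange (by decide +kernel) (by decide +kernel) b

theorem exists_affineBasis_euclideanSpace {ι : Type*} [Fintype ι] {d : ℕ}
    (hι : Fintype.card ι = d + 1) : Nonempty (AffineBasis ι ℝ (EuclideanSpace ℝ (Fin d))) :=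
  AffineBasis.exists_affineBasis_of_finiteDimensional (by simpa using hι)

/-- Theorem 1.4 / Theorem 3.4: for every `d ≥ 3` there is a finite triangulation
`K` of `Δ^d` and a facet `σ` of `K` such that every Sperner labelling of `K` has
a rainbow facet distinct from `σ`; consequently Gallai's graph `G_K` is
`(d+2)`-chromatic but not `(d+2)`-critical. -/
theorem exists_noncritical_sperner_triangulation (d : ℕ) (hd : 3 ≤ d) :
    ∃ T : SimplexTriangulation d, ∃ σ, T.IsFacet σ ∧
      (∀ l : EuclideanSpace ℝ (Fin d) → Fin (d + 1), T.IsSperner l →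
        ∃ τ, T.IsFacet τ ∧ τ ≠ σ ∧ Rainbow l τ) ∧
      (T.GallaiGraph).chromaticNumber = (d + 2 : ℕ) ∧
      ¬ ((T.GallaiGraph).Colorable (d + 2) ∧
          ¬ (T.GallaiGraph).Colorable (d + 1) ∧
          ∀ e ∈ (T.GallaiGraph).edgeSet,
            ((T.GallaiGraph).deleteEdges {e}).Colorable (d + 1)) := by
  obtain ⟨m, rfl⟩ := Nat.exists_eq_add_of_le hd
  have e : Fin 4 ⊕ Fin m ≃ Fin (3 + m + 1) := finSumFinEquiv.trans (finCongr (by omega))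
  obtain ⟨b₀⟩ := exists_affineBasis_euclideanSpace (Fintype.card_fin 4)
  obtain ⟨b⟩ := exists_affineBasis_euclideanSpace <|
    (Fintype.card_congr e).trans (Fintype.card_fin _)
  let R := (tetrahedronTriangulation.toRegularTriangulation b₀).join b₀ b
  let T := R.toSimplexTriangulation e
  have hσ : T.IsFacet (R.simplex 0) := R.isFacet_simplex e 0
  have hrainbow : ∀ l, T.IsSperner l → ∃ τ, T.IsFacet τ ∧ τ ≠ R.simplex 0 ∧ Rainbow l τ :=
    fun _ => ((forcesRainbowAwayFrom_tetrahedronTriangulation b₀).join b).exists_rainbow e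
  obtain ⟨edge, hedge, hdelete⟩ :=
    T.exists_edge_not_colorable_deleteEdges (σ := ⟨R.simplex 0, hσ⟩) hrainbow
  exact ⟨T, R.simplex 0, hσ, hrainbow,
    T.chromaticNumber_gallaiGraph (σ := ⟨R.simplex 0, hσ⟩) hrainbow,
    fun ⟨_, _, hcritical⟩ => hdelete (hcritical edge hedge)⟩
end
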